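/- For every integer n ≥ 3, f(n,0) = n·Σ_{i=1}^{n−1} binom(n−1, i)·(−1)^{i−1}·f(n−i−1, i), where f(C,D) = [s_{(2^C,1^D)}] X_{GN_{C+D,C}} for C, D ≥ 0 and (2^a,1^b) denotes the partition with a parts equal to 2 followed by b parts equal to 1. -/

import Mathlib

open scoped Classical

/-! ### Cells and Young diagrams -/

/-- A cell of a Young diagram: `(row, column)`, both 0-indexed, rows from the top. -/
abbrev Cell : Type := ℕ × ℕ

/-- The length of row `i` (0-indexed from the top) of the Young diagram of the
partition `lam`, whose parts are arranged in weakly decreasing order. -/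
def rowLen {N : ℕ} (lam : Nat.Partition N) (i : ℕ) : ℕ :=
  ((lam.parts.sort (· ≤ ·)).reverse).getD i 0

/-- The Young diagram of a partition, as a set of cells. -/
def diag {N : ℕ} (lam : Nat.Partition N) : Set Cell :=
  {c : Cell | c.2 < rowLen lam c.1}

/-- The number of rows (the length) of a partition. -/
def numRows {N : ℕ} (lam : Nat.Partition N) : ℕ := Multiset.card lam.parts

/-! ### Chromatic symmetric functions and Schur functions, as monomial-coefficient
functions.  A formal power series of bounded degree in the commuting variables
`x_0, x_1, x_2, …` is recorded by the map sending an exponent vector `μ : ℕ → ℕ`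
(only finitely many nonzero entries ever matter) to the coefficient of the monomial
`∏ i, x_i ^ μ i`.  Colors / tableau entries are positive integers, so the variable
`x_0` is never used. -/

/-- A proper coloring of `G` by positive integers. -/
def IsProperColoring {V : Type*} (G : SimpleGraph V) (f : V → ℕ) : Prop :=
  (∀ v, 0 < f v) ∧ ∀ u v, G.Adj u v → f u ≠ f v

/-- The coefficient of the monomial `∏ i, x_i ^ μ i` in the chromatic symmetric
function `X_G = ∑_{proper colorings f} ∏_{v} x_{f v}`. -/
noncomputable def XCoeff {V : Type*} [Fintype V] (G : SimpleGraph V) (μ : ℕ → ℕ) : ℚ :=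
  Nat.card {f : V → ℕ //
    IsProperColoring G f ∧ ∀ i, Nat.card {v : V // f v = i} = μ i}

/-- A semistandard Young tableau of shape `lam`: positive entries on the diagram
(normalized to `0` off the diagram), weakly increasing along rows, strictly
increasing down columns. -/
def IsSSYT {N : ℕ} (lam : Nat.Partition N) (t : Cell → ℕ) : Prop :=
  (∀ c, c ∉ diag lam → t c = 0) ∧ (∀ c ∈ diag lam, 0 < t c) ∧
  (∀ i j : ℕ, ((i, j + 1) : Cell) ∈ diag lam → t (i, j) ≤ t (i, j + 1)) ∧
  (∀ i j : ℕ, ((i + 1, j) : Cell) ∈ diag lam → t (i, j) < t (i + 1, j))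

/-- The coefficient of the monomial `∏ i, x_i ^ μ i` in the Schur function `s_lam`,
i.e. the number of SSYT of shape `lam` and weight `μ`. -/
noncomputable def schurFn {N : ℕ} (lam : Nat.Partition N) (μ : ℕ → ℕ) : ℚ :=
  Nat.card {t : Cell → ℕ // IsSSYT lam t ∧
    ∀ i, Nat.card {c : Cell // c ∈ diag lam ∧ t c = i} = μ i}

/-- The coefficient `[s_lam] f` of the Schur function `s_lam` in the (unique, when it
exists) expansion `f = ∑_{ν ⊢ N} c_ν s_ν` of a symmetric function `f`, homogeneous of
degree `N`, given by its monomial coefficients. -/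
noncomputable def sCoeff {N : ℕ} (f : (ℕ → ℕ) → ℚ) (lam : Nat.Partition N) : ℚ :=
  if h : ∃ c : Nat.Partition N →₀ ℚ, ∀ μ, f μ = c.sum fun ν a => a * schurFn ν μ
  then h.choose lam else 0

/-! ### Graphs: generalized nets, generalized spiders, disjoint unions -/

/-- The generalized net `GN_{n,m}`: the complete graph on the body `Fin n`, with a
pendant (`Sum.inr j`) attached to the anchor `Sum.inl j` for each `j : Fin m`. -/
def genNet (n m : ℕ) : SimpleGraph (Fin n ⊕ Fin m) :=
  SimpleGraph.fromRel fun a b =>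
    match a, b with
    | Sum.inl _, Sum.inl _ => True
    | Sum.inl i, Sum.inr j => (i : ℕ) = (j : ℕ)
    | Sum.inr _, _ => False

/-- The generalized spider `GS_{n,(2,1^{m-1})}`: the complete graph on the body
`Fin n`, a pendant `Sum.inr (Sum.inl j)` attached to the body vertex `Sum.inl j` for
each `j : Fin m`, and one extra vertex `Sum.inr (Sum.inr 0)` (the special pendant)
attached to the pendant `Sum.inr (Sum.inl 0)`, so that the body vertex `0` (the
special anchor) carries an attached path on two vertices. -/
def genSpider2 (n m : ℕ) : SimpleGraph (Fin n ⊕ (Fin m ⊕ Fin 1)) :=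
  SimpleGraph.fromRel fun a b =>
    match a, b with
    | Sum.inl _, Sum.inl _ => True
    | Sum.inl i, Sum.inr (Sum.inl j) => (i : ℕ) = (j : ℕ)
    | Sum.inr (Sum.inl j), Sum.inr (Sum.inr _) => (j : ℕ) = 0
    | _, _ => False

/-- Disjoint union of two simple graphs. -/
def disjUnion {α β : Type*} (G : SimpleGraph α) (H : SimpleGraph β) :
    SimpleGraph (α ⊕ β) :=
  SimpleGraph.fromRel fun a b =>
    match a, b with
    | Sum.inl a, Sum.inl b => G.Adj a b
    | Sum.inr a, Sum.inr b => H.Adj a b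
    | _, _ => False

/-- The one-vertex graph `K_1`. -/
def K1 : SimpleGraph (Fin 1) := ⊥

/-- The path (= complete graph) on two vertices `P_2`. -/
def P2 : SimpleGraph (Fin 2) := ⊤

/-! ### Operations on partitions -/

/-- `removeOnes lam t` is the partition `lam ∖ 1^t` obtained by deleting `t` parts
equal to `1` from `lam` (junk value if `lam` has fewer than `t` parts equal to `1`). -/
def removeOnes {N : ℕ} (lam : Nat.Partition N) (t : ℕ) : Nat.Partition (N - t) :=
  if h : Multiset.replicate t 1 ≤ lam.parts then
    { parts := lam.parts - Multiset.replicate t 1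
      parts_pos := fun hx =>
        lam.parts_pos (Multiset.mem_of_le (tsub_le_self) hx)
      parts_sum := by
        have h1 : (lam.parts - Multiset.replicate t 1) + Multiset.replicate t 1
            = lam.parts := tsub_add_cancel_of_le h
        have h2 := congrArg Multiset.sum h1
        rw [Multiset.sum_add, Multiset.sum_replicate, lam.parts_sum] at h2
        simp only [smul_eq_mul, mul_one] at h2
        omega }
  else Nat.Partition.indiscrete (N - t)

/-- The partition `(2^a, 1^b)` of `2*a + b`. -/
def twoOne (a b : ℕ) : Nat.Partition (2 * a + b) where
  parts := Multiset.replicate a 2 + Multiset.replicate b 1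
  parts_pos := by
    intro i hi
    rw [Multiset.mem_add] at hi
    rcases hi with hi | hi <;> · rw [Multiset.eq_of_mem_replicate hi]; omega
  parts_sum := by
    rw [Multiset.sum_add, Multiset.sum_replicate, Multiset.sum_replicate]
    simp only [smul_eq_mul, mul_one]
    omega

/-! ### Special rim hook `G`-tabloids -/

/-- Two cells are adjacent if they share an edge. -/
def cellAdj (c d : Cell) : Prop :=
  (c.1 = d.1 ∧ (c.2 + 1 = d.2 ∨ d.2 + 1 = c.2)) ∨
  (c.2 = d.2 ∧ (c.1 + 1 = d.1 ∨ d.1 + 1 = c.1))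

/-- A set of cells is (the diagram of) a Young diagram if it is closed under
decreasing either coordinate. -/
def IsYoungDiag (D : Set Cell) : Prop :=
  ∀ i j i' j' : ℕ, ((i, j) : Cell) ∈ D → i' ≤ i → j' ≤ j → ((i', j') : Cell) ∈ D

/-- A set of cells is connected (via edge-adjacency, within the set). -/
def CellConnected (S : Set Cell) : Prop :=
  ∀ c ∈ S, ∀ d ∈ S, Relation.ReflTransGen (fun a b => a ∈ S ∧ b ∈ S ∧ cellAdj a b) c d

/-- A border strip (= rim hook, as a set of cells): nonempty, connected, and
containing no 2×2 square of cells. -/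
def IsBorderStrip (H : Set Cell) : Prop :=
  H.Nonempty ∧ CellConnected H ∧
    ∀ i j : ℕ, ¬(((i, j) : Cell) ∈ H ∧ ((i + 1, j) : Cell) ∈ H ∧
      ((i, j + 1) : Cell) ∈ H ∧ ((i + 1, j + 1) : Cell) ∈ H)

/-- `H` is a rim hook of the Young diagram `D`: a border strip contained in `D`
whose removal leaves a Young diagram. -/
def IsRimHookOf (D H : Set Cell) : Prop :=
  H ⊆ D ∧ IsBorderStrip H ∧ IsYoungDiag (D \ H)

/-- `IsRemovalSeq L D` says that the sets of cells in the list `L` may be removed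
successively from the diagram `D`, each being a rim hook of what remains, with
nothing left at the end. -/
def IsRemovalSeq : List (Set Cell) → Set Cell → Prop
  | [], D => D = ∅
  | H :: L, D => IsRimHookOf D H ∧ IsRemovalSeq L (D \ H)

/-- A special rim hook `G`-tabloid of shape `lam`, with respect to an order `r` on
the vertices of `G`: the cells of the diagram of `lam` are filled bijectively with
the vertices of `G` (vertex `v` goes in cell `pos v`), and the diagram is tiled by
rim hooks, successively removable, each meeting the first column.  The rim hooks are
recorded by the labelling `hk`, which assigns to each vertex the topmost row in which
its rim hook meets the first column.  The vertices in each rim hook form a stable set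
of `G` and, read from the rim hook's (bottom) cell in the first column — i.e. in
increasing order of the diagonal index `column − row` — they increase with respect
to `r`. -/
structure SRHGTabloid {V : Type*} (G : SimpleGraph V) (r : V → V → Prop)
    {N : ℕ} (lam : Nat.Partition N) where
  /-- the cell occupied by each vertex -/
  pos : V → Cell
  /-- the label of the rim hook containing each vertex: the topmost row in which
  that rim hook meets the first column -/
  hk : V → ℕ
  pos_inj : Function.Injective pos
  pos_range : Set.range pos = diag lam
  hk_mem : ∀ v, ((hk v, 0) : Cell) ∈ pos '' {u | hk u = hk v}
  hk_min : ∀ v i, ((i, 0) : Cell) ∈ pos '' {u | hk u = hk v} → hk v ≤ i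
  removal : ∃ L : List ℕ, L.Nodup ∧ (∀ i, i ∈ L ↔ ∃ v, hk v = i) ∧
    IsRemovalSeq (L.map fun i => pos '' {u | hk u = i}) (diag lam)
  stable : ∀ u v, hk u = hk v → u ≠ v → ¬G.Adj u v
  increasing : ∀ u v, hk u = hk v →
    ((pos u).2 : ℤ) - ((pos u).1 : ℤ) < ((pos v).2 : ℤ) - ((pos v).1 : ℤ) → r u v

/-- The sign of a special rim hook `G`-tabloid: `(-1)` to the total number of north
steps, where a rim hook spanning `k` rows contributes `k - 1` north steps. -/
noncomputable def tabSign {V : Type*} {G : SimpleGraph V} {r : V → V → Prop}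
    {N : ℕ} {lam : Nat.Partition N} (T : SRHGTabloid G r lam) : ℤ :=
  (-1) ^ ∑ i ∈ Finset.range N,
    ({a : ℕ | ∃ v, T.hk v = i ∧ (T.pos v).1 = a}.ncard - 1)

/-- The cells of the head of a tabloid of shape `lam`: the rows of length `≥ 2`. -/
def headCells {N : ℕ} (lam : Nat.Partition N) : Set Cell :=
  {c : Cell | c ∈ diag lam ∧ 2 ≤ rowLen lam c.1}

/-- The cells of the tail of a tabloid of shape `lam`: the rows of length `1`. -/
def tailCells {N : ℕ} (lam : Nat.Partition N) : Set Cell :=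
  {c : Cell | c ∈ diag lam ∧ rowLen lam c.1 = 1}

/-- Two special rim hook `G`-tabloids have the same head: the same cells of the head
are occupied by the same vertices, and the rim hook structure restricted to the head
agrees. -/
def SameHead {V : Type*} {G : SimpleGraph V} {r : V → V → Prop} {N : ℕ}
    {lam : Nat.Partition N} (T T' : SRHGTabloid G r lam) : Prop :=
  (∀ v, T.pos v ∈ headCells lam ↔ T'.pos v ∈ headCells lam) ∧
  (∀ v, T.pos v ∈ headCells lam → T.pos v = T'.pos v) ∧
  (∀ u v, T.pos u ∈ headCells lam → T.pos v ∈ headCells lam →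
    (T.hk u = T.hk v ↔ T'.hk u = T'.hk v))

/-- `f(C,D) = [s_{(2^C,1^D)}] X_{GN_{C+D,C}}`. -/
noncomputable def fCD (C D : ℕ) : ℚ :=
  sCoeff (XCoeff (genNet (C + D) C)) (twoOne C D)

/-- shift of a shape -/
noncomputable def sh (ν : ℕ →₀ ℕ) : ℕ →₀ ℕ :=
  Finsupp.comapDomain (fun i => i + 1) ν (fun _ _ _ _ h => by simpa using h)

@[simp] lemma sh_apply (ν : ℕ →₀ ℕ) (i : ℕ) : sh ν i = ν (i + 1) := rfl

lemma mem_strip {ν σ : ℕ →₀ ℕ} :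
    σ ∈ Finset.Icc (sh ν) ν ↔ ∀ i, ν (i + 1) ≤ σ i ∧ σ i ≤ ν i := by
  rw [Finset.mem_Icc, Finsupp.le_def, Finsupp.le_def]
  simp only [sh_apply]
  exact ⟨fun h i => ⟨h.1 i, h.2 i⟩, fun h => ⟨fun i => (h i).1, fun i => (h i).2⟩⟩

lemma degree_eq_range (ν : ℕ →₀ ℕ) (M : ℕ) (h : ∀ i, M ≤ i → ν i = 0) :
    Finsupp.degree ν = ∑ i ∈ Finset.range M, ν i := by
  rw [Finsupp.degree_apply]
  apply Finset.sum_subset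
  · intro i hi
    rw [Finset.mem_range]
    by_contra hc
    exact (Finsupp.mem_support_iff.1 hi) (h i (by omega))
  · intro i _ hi
    simpa using hi

lemma exists_bound (ν : ℕ →₀ ℕ) : ∃ M, ∀ i, M ≤ i → ν i = 0 := by
  refine ⟨ν.support.sup id + 1, fun i hi => ?_⟩
  by_contra hc
  have : i ≤ ν.support.sup id := Finset.le_sup (f := id) (Finsupp.mem_support_iff.2 hc)
  omega

/-- Schur polynomials via branching. -/
noncomputable def SP {R : Type*} [CommRing R] (x : ℕ → R) : ℕ → (ℕ →₀ ℕ) → R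
  | 0, ν => if ν = 0 then 1 else 0
  | m + 1, ν => ∑ σ ∈ Finset.Icc (sh ν) ν,
      SP x m σ * x (m + 1) ^ (Finsupp.degree ν - Finsupp.degree σ)

lemma degree_mono' {σ ν : ℕ →₀ ℕ} (h : ∀ i, σ i ≤ ν i) :
    Finsupp.degree σ ≤ Finsupp.degree ν := by
  obtain ⟨M, hM⟩ := exists_bound ν
  rw [degree_eq_range ν M hM, degree_eq_range σ M (fun i hi => by
    have := h i; rw [hM i hi] at this; omega)]
  exact Finset.sum_le_sum fun i _ => h i

lemma strip_degree {σ ν : ℕ →₀ ℕ} (h : σ ∈ Finset.Icc (sh ν) ν) :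
    Finsupp.degree σ ≤ Finsupp.degree ν :=
  degree_mono' fun i => (mem_strip.1 h i).2

lemma SP_congr {R : Type*} [CommRing R] (x y : ℕ → R) (m : ℕ)
    (h : ∀ i, 1 ≤ i → i ≤ m → x i = y i) (ν : ℕ →₀ ℕ) : SP x m ν = SP y m ν := by
  induction m generalizing ν with
  | zero => rfl
  | succ m ih =>
    simp only [SP]
    refine Finset.sum_congr rfl fun σ _ => ?_
    rw [ih (fun i h1 h2 => h i h1 (by omega)), h (m + 1) (by omega) le_rfl]

lemma SP_map {R R' : Type*} [CommRing R] [CommRing R'] (φ : R →+* R') (x : ℕ → R) (m : ℕ)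
    (ν : ℕ →₀ ℕ) : φ (SP x m ν) = SP (fun i => φ (x i)) m ν := by
  induction m generalizing ν with
  | zero => simp only [SP]; split_ifs <;> simp
  | succ m ih => simp only [SP, map_sum, map_mul, map_pow, ih]

lemma SP_homog {R : Type*} [CommRing R] (c : R) (x : ℕ → R) (m : ℕ)
    (ν : ℕ →₀ ℕ) : SP (fun i => c * x i) m ν = c ^ (Finsupp.degree ν) * SP x m ν := by
  induction m generalizing ν with
  | zero => simp only [SP]; split_ifs with h <;> simp [h]
  | succ m ih =>
    simp only [SP, Finset.mul_sum]
    refine Finset.sum_congr rfl fun σ hσ => ?_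
    rw [ih, mul_pow]
    have := strip_degree hσ
    obtain ⟨d, hd⟩ := Nat.exists_eq_add_of_le this
    rw [hd, Nat.add_sub_cancel_left, pow_add]; ring

/-- Bender-Knuth reflection. -/
noncomputable def bk (ν σ ρ : ℕ →₀ ℕ) : ℕ →₀ ℕ :=
  Finsupp.onFinset ν.support
    (fun i => if ν i = 0 then 0 else
      max (σ i) (ν (i + 1)) + (if i = 0 then ν 0 else min (ν i) (σ (i - 1))) - ρ i)
    (fun i h => by
      rw [Finsupp.mem_support_iff]; intro h0; simp [h0] at h)

lemma bk_apply_zero {ν σ ρ : ℕ →₀ ℕ} (h1 : ∀ i, ν (i + 1) ≤ ρ i ∧ ρ i ≤ ν i)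
    (h2 : ∀ i, ρ (i + 1) ≤ σ i ∧ σ i ≤ ρ i) :
    bk ν σ ρ 0 + ρ 0 = max (σ 0) (ν 1) + ν 0 := by
  have a := h1 0
  have b := h2 0
  simp only [bk, Finsupp.onFinset_apply]
  split_ifs <;> grind

lemma bk_apply_succ {ν σ ρ : ℕ →₀ ℕ} (h1 : ∀ i, ν (i + 1) ≤ ρ i ∧ ρ i ≤ ν i)
    (h2 : ∀ i, ρ (i + 1) ≤ σ i ∧ σ i ≤ ρ i) (i : ℕ) :
    bk ν σ ρ (i + 1) + ρ (i + 1) = max (σ (i + 1)) (ν (i + 2)) + min (ν (i + 1)) (σ i) := by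
  have a := h1 (i + 1)
  have b := h2 (i + 1)
  have c := h2 i
  simp only [bk, Finsupp.onFinset_apply, Nat.add_sub_cancel]
  split_ifs <;> grind

lemma bk_strip {ν σ ρ : ℕ →₀ ℕ} (h1 : ∀ i, ν (i + 1) ≤ ρ i ∧ ρ i ≤ ν i)
    (h2 : ∀ i, ρ (i + 1) ≤ σ i ∧ σ i ≤ ρ i) :
    (∀ i, ν (i + 1) ≤ bk ν σ ρ i ∧ bk ν σ ρ i ≤ ν i) ∧
    (∀ i, bk ν σ ρ (i + 1) ≤ σ i ∧ σ i ≤ bk ν σ ρ i) := by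
  have e0 := bk_apply_zero h1 h2
  have es := bk_apply_succ h1 h2
  constructor
  · intro i
    rcases i with _ | i
    · have := h1 0; have := h2 0; grind
    · have := h1 (i+1); have := h2 (i+1); have := es i; have := h2 i; grind
  · intro i
    have := h1 (i+1); have := h2 (i+1); have := es i; have := h2 i
    rcases i with _ | i
    · have := h1 0; grind
    · have := h1 (i+1); have := es i; have := h2 i; grind

lemma bk_bk {ν σ ρ : ℕ →₀ ℕ} (h1 : ∀ i, ν (i + 1) ≤ ρ i ∧ ρ i ≤ ν i)
    (h2 : ∀ i, ρ (i + 1) ≤ σ i ∧ σ i ≤ ρ i) : bk ν σ (bk ν σ ρ) = ρ := by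
  obtain ⟨h3, h4⟩ := bk_strip h1 h2
  ext i
  rcases i with _ | i
  · have := bk_apply_zero h1 h2; have := bk_apply_zero h3 h4; omega
  · have := bk_apply_succ h1 h2 i; have := bk_apply_succ h3 h4 i; omega

lemma bk_degree {ν σ ρ : ℕ →₀ ℕ} (h1 : ∀ i, ν (i + 1) ≤ ρ i ∧ ρ i ≤ ν i)
    (h2 : ∀ i, ρ (i + 1) ≤ σ i ∧ σ i ≤ ρ i) :
    Finsupp.degree (bk ν σ ρ) + Finsupp.degree ρ = Finsupp.degree ν + Finsupp.degree σ := by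
  obtain ⟨h3, h4⟩ := bk_strip h1 h2
  obtain ⟨M, hM⟩ := exists_bound ν
  have key : ∀ K, ∑ i ∈ Finset.range (K + 1), (bk ν σ ρ i + ρ i) =
      ∑ i ∈ Finset.range K, σ i + ∑ i ∈ Finset.range (K + 1), ν i + max (σ K) (ν (K + 1)) := by
    intro K
    induction K with
    | zero => have := bk_apply_zero h1 h2; simp; omega
    | succ K ih =>
      rw [Finset.sum_range_succ, ih, Finset.sum_range_succ (⇑σ) K,
        Finset.sum_range_succ (⇑ν) (K + 1), bk_apply_succ h1 h2 K]
      have := max_add_min (σ K) (ν (K + 1))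
      have := min_comm (σ K) (ν (K + 1))
      have e : K + 1 + 1 = K + 2 := rfl
      rw [e]
      omega
  have hρ : ∀ i, M ≤ i → ρ i = 0 := fun i hi => by have := h1 i; have := hM i hi; omega
  have hσ : ∀ i, M ≤ i → σ i = 0 := fun i hi => by have := h2 i; have := hρ i hi; omega
  have hb : ∀ i, M ≤ i → bk ν σ ρ i = 0 := fun i hi => by have := h3 i; have := hM i hi; omega
  have := key M
  rw [hσ M le_rfl, hM (M + 1) (by omega), Finset.sum_add_distrib] at this
  rw [degree_eq_range _ (M + 1) (fun i hi => hb i (by omega)),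
    degree_eq_range ρ (M + 1) (fun i hi => hρ i (by omega)),
    degree_eq_range ν (M + 1) (fun i hi => hM i (by omega)), degree_eq_range σ M hσ]
  simp at this; omega

lemma bk_sum {R : Type*} [CommRing R] (F : (ℕ →₀ ℕ) → R) (a b : R) (ν : ℕ →₀ ℕ) :
    ∑ ρ ∈ Finset.Icc (sh ν) ν, (∑ σ ∈ Finset.Icc (sh ρ) ρ,
      F σ * a ^ (Finsupp.degree ρ - Finsupp.degree σ)) *
        b ^ (Finsupp.degree ν - Finsupp.degree ρ) =
    ∑ ρ ∈ Finset.Icc (sh ν) ν, (∑ σ ∈ Finset.Icc (sh ρ) ρ,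
      F σ * b ^ (Finsupp.degree ρ - Finsupp.degree σ)) *
        a ^ (Finsupp.degree ν - Finsupp.degree ρ) := by
  simp only [Finset.sum_mul]
  rw [Finset.sum_sigma', Finset.sum_sigma']
  refine Finset.sum_bij' (fun p _ => ⟨bk ν p.2 p.1, p.2⟩) (fun p _ => ⟨bk ν p.2 p.1, p.2⟩)
    ?_ ?_ ?_ ?_ ?_
  · rintro ⟨ρ, σ⟩ h
    simp only [Finset.mem_sigma, mem_strip] at h ⊢
    exact bk_strip h.1 h.2
  · rintro ⟨ρ, σ⟩ h
    simp only [Finset.mem_sigma, mem_strip] at h ⊢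
    exact bk_strip h.1 h.2
  · rintro ⟨ρ, σ⟩ h
    simp only [Finset.mem_sigma, mem_strip] at h ⊢
    rw [bk_bk h.1 h.2]
  · rintro ⟨ρ, σ⟩ h
    simp only [Finset.mem_sigma, mem_strip] at h ⊢
    rw [bk_bk h.1 h.2]
  · rintro ⟨ρ, σ⟩ h
    simp only [Finset.mem_sigma, mem_strip] at h ⊢
    have h0 := bk_degree h.1 h.2
    have h1 := degree_mono' fun i => (h.1 i).2
    have h2 := degree_mono' fun i => (h.2 i).2
    have e1 : Finsupp.degree (bk ν σ ρ) - Finsupp.degree σ =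
      Finsupp.degree ν - Finsupp.degree ρ := by omega
    have e2 : Finsupp.degree ν - Finsupp.degree (bk ν σ ρ) =
      Finsupp.degree ρ - Finsupp.degree σ := by omega
    rw [e1, e2]; ring

lemma SP_swap {R : Type*} [CommRing R] (x : ℕ → R) (m k : ℕ) (hk : 1 ≤ k) (hkm : k + 1 ≤ m)
    (ν : ℕ →₀ ℕ) : SP (fun i => x (Equiv.swap k (k + 1) i)) m ν = SP x m ν := by
  induction m generalizing ν with
  | zero => omega
  | succ m ih =>
    rcases Nat.lt_or_ge k m with h | h
    · simp only [SP]
      refine Finset.sum_congr rfl fun σ _ => ?_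
      rw [ih (by omega), Equiv.swap_apply_of_ne_of_ne (by omega) (by omega)]
    · obtain rfl : k = m := by omega
      obtain ⟨m, rfl⟩ : ∃ m, k = m + 1 := ⟨k - 1, by omega⟩
      simp only [SP, Equiv.swap_apply_left, Equiv.swap_apply_right]
      rw [bk_sum]
      have : ∀ σ, SP (fun i => x (Equiv.swap (m + 1) (m + 1 + 1) i)) m σ = SP x m σ := fun σ =>
        SP_congr _ _ _ (fun i _ _ => by
          rw [Equiv.swap_apply_of_ne_of_ne (by omega) (by omega)]) σ
      simp only [this]

lemma SP_cycle {R : Type*} [CommRing R] (x : ℕ → R) (m : ℕ) (ν : ℕ →₀ ℕ) (j : ℕ)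
    (hj : j + 1 ≤ m) :
    SP (fun i => if i ≤ j then x (i + 1) else if i = j + 1 then x 1 else x i) m ν =
      SP x m ν := by
  induction j with
  | zero =>
    apply SP_congr
    intro i h1 h2
    rw [if_neg (by omega)]
    split_ifs with h
    · subst h; rfl
    · rfl
  | succ j ih =>
    rw [← ih (by omega), ← SP_swap _ m (j + 1) (by omega) (by omega)]
    apply SP_congr
    intro i h1 h2
    rcases Nat.lt_trichotomy i (j + 1) with h | h | h
    · rw [Equiv.swap_apply_of_ne_of_ne (by omega) (by omega)]
      simp only [show i ≤ j by omega, show i ≤ j + 1 by omega, if_true]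
    · subst h; simp
    · rcases Nat.lt_or_ge (j + 2) i with h' | h'
      · rw [Equiv.swap_apply_of_ne_of_ne (by omega) (by omega)]
        grind
      · obtain rfl : i = j + 1 + 1 := by omega
        simp

lemma SP_zero {R : Type*} [CommRing R] (x : ℕ → R) (m : ℕ) : SP x m 0 = 1 := by
  induction m with
  | zero => simp [SP]
  | succ m ih =>
    have : sh 0 = 0 := by ext i; simp
    simp [SP, this, ih]

lemma SP_vanish {R : Type*} [CommRing R] (x : ℕ → R) (m : ℕ) (ν : ℕ →₀ ℕ) (h : ν m ≠ 0) :
    SP x m ν = 0 := by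
  induction m generalizing ν with
  | zero => simp only [SP]; rw [if_neg]; rintro rfl; simp at h
  | succ m ih =>
    simp only [SP]
    refine Finset.sum_eq_zero fun σ hσ => ?_
    rw [ih, zero_mul]
    have := mem_strip.1 hσ m
    omega

/-- column shape `1^k` -/
noncomputable def col (k : ℕ) : ℕ →₀ ℕ :=
  Finsupp.onFinset (Finset.range k) (fun i => if i < k then 1 else 0)
    (fun i h => by by_contra hc; simp at hc; simp [hc] at h)

lemma col_apply (k i : ℕ) : col k i = if i < k then 1 else 0 := rfl

lemma degree_col (k : ℕ) : Finsupp.degree (col k) = k := by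
  rw [degree_eq_range _ k (fun i hi => by simp [col_apply]; omega)]
  rw [Finset.sum_congr rfl (g := fun _ => 1) (fun i hi => by
    rw [col_apply, if_pos (Finset.mem_range.1 hi)])]
  simp

lemma SP_strip {R : Type*} [CommRing R] (x : ℕ → R) (n : ℕ) (τ : ℕ →₀ ℕ) (h : τ n = 0) :
    SP x n (τ + col n) = (∏ i ∈ Finset.range n, x (i + 1)) * SP x n τ := by
  induction n generalizing τ with
  | zero =>
    have : col 0 = 0 := by ext i; simp [col_apply]
    simp [this]
  | succ n ih =>
    simp only [SP]
    rw [← Finset.sum_filter_of_ne (p := fun σ : ℕ →₀ ℕ => σ n = 0), 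
      ← Finset.sum_filter_of_ne (s := Finset.Icc (sh τ) τ) (p := fun σ : ℕ →₀ ℕ => σ n = 0),
      Finset.mul_sum]
    · symm
      refine Finset.sum_bij' (fun σ _ => σ + col n) (fun σ _ => σ - col n) ?_ ?_ ?_ ?_ ?_
      · intro σ hσ
        simp only [Finset.mem_filter, mem_strip, Finsupp.add_apply, col_apply] at hσ ⊢
        refine ⟨fun i => ?_, by simp [hσ.2]⟩
        have := hσ.1 i
        split_ifs <;> omega
      · intro σ hσ
        simp only [Finset.mem_filter, mem_strip, Finsupp.add_apply, col_apply,
          Finsupp.tsub_apply] at hσ ⊢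
        refine ⟨fun i => ?_, by simp [hσ.2]⟩
        have := hσ.1 i
        rcases Nat.lt_trichotomy i n with h' | h' | h'
        · simp only [h', show i + 1 < n + 1 by omega, show i < n + 1 by omega, if_true] at this ⊢
          omega
        · subst h'; simp [hσ.2, h]
        · simp only [show ¬ i < n by omega, show ¬ i + 1 < n + 1 by omega,
            show ¬ i < n + 1 by omega, if_false] at this ⊢
          omega
      · intro σ hσ
        simp
      · intro σ hσ
        simp only [Finset.mem_filter, mem_strip, Finsupp.add_apply, col_apply] at hσ ⊢
        ext i
        simp only [Finsupp.add_apply, Finsupp.tsub_apply, col_apply]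
        have := hσ.1 i
        split_ifs at * <;> omega
      · intro σ hσ
        rw [Finset.mem_filter] at hσ
        rw [ih _ hσ.2, Finset.prod_range_succ]
        have := strip_degree hσ.1
        rw [map_add, map_add, degree_col, degree_col, show Finsupp.degree τ + (n + 1) -
          (Finsupp.degree σ + n) = Finsupp.degree τ - Finsupp.degree σ + 1 by omega, pow_succ]
        ring
    · intro σ _ hne
      by_contra hc
      exact hne (by rw [SP_vanish _ _ _ hc, zero_mul])
    · intro σ _ hne
      by_contra hc
      exact hne (by rw [SP_vanish _ _ _ hc, zero_mul])

lemma strip_antitone {σ ν : ℕ →₀ ℕ} (h : σ ∈ Finset.Icc (sh ν) ν) : Antitone σ :=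
  antitone_nat_of_succ_le fun i => by
    have := mem_strip.1 h i; have := mem_strip.1 h (i + 1); omega

lemma ext_col {τ : ℕ →₀ ℕ} {k : ℕ} (h : ∀ i, τ i = if i < k then 1 else 0) : τ = col k :=
  Finsupp.ext h

lemma SP_cyclic_zero (n : ℕ) (ζ : ℂ) (hζ : IsPrimitiveRoot ζ (n + 1)) (τ : ℕ →₀ ℕ)
    (h0 : 0 < Finsupp.degree τ) (hn : Finsupp.degree τ ≤ n) :
    SP (fun i => - ζ ^ i) (n + 1) τ = 0 := by
  have h1 := SP_homog ζ (fun i => - ζ ^ i) (n + 1) τ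
  have h2 := SP_cycle (fun i => - ζ ^ i) (n + 1) τ n le_rfl
  have h3 : SP (fun i => ζ * (- ζ ^ i)) (n + 1) τ = SP (fun i => - ζ ^ i) (n + 1) τ := by
    rw [← h2]
    apply SP_congr
    intro i hi1 hi2
    split_ifs with ha hb
    · rw [pow_succ]; ring
    · subst hb
      have := hζ.pow_eq_one
      linear_combination (-ζ) * this
    · omega
  rw [h3] at h1
  have h4 : ζ ^ Finsupp.degree τ ≠ 1 := hζ.pow_ne_one_of_pos_of_lt (by omega) (by omega)
  have h5 : (ζ ^ Finsupp.degree τ - 1) * SP (fun i => - ζ ^ i) (n + 1) τ = 0 := by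
    linear_combination -h1
  rcases mul_eq_zero.1 h5 with h | h
  · exact absurd (by linear_combination h) h4
  · exact h

lemma antitone_zero {τ : ℕ →₀ ℕ} (hτ : Antitone τ) (h : τ 0 = 0) : τ = 0 := by
  ext i; have := hτ (Nat.zero_le i); simp; omega

/-- number of rows -/
lemma exists_rows {τ : ℕ →₀ ℕ} (hτ : Antitone τ) : ∃ b, ∀ i, τ i ≠ 0 ↔ i < b := by
  obtain ⟨M, hM⟩ := exists_bound τ
  have hex : ∃ b, τ b = 0 := ⟨M, hM M le_rfl⟩
  refine ⟨Nat.find hex, fun i => ⟨fun h => ?_, fun h => Nat.find_min hex h⟩⟩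
  by_contra hc
  have := hτ (not_lt.1 hc)
  have := Nat.find_spec hex
  omega

lemma SP_delta (n : ℕ) (ζ : ℂ) (hζ : IsPrimitiveRoot ζ (n + 1)) :
    ∀ (k : ℕ) (τ : ℕ →₀ ℕ), Antitone τ → Finsupp.degree τ = k → k ≤ n →
    SP (fun i => - ζ ^ i) n τ = if τ = col k then 1 else 0 := by
  intro k
  induction k using Nat.strong_induction_on with
  | _ k ih =>
  intro τ hτ hd hk
  rcases Nat.eq_zero_or_pos k with rfl | hpos
  · have h0 : τ = 0 := by
      obtain ⟨M, hM⟩ := exists_bound τ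
      rw [degree_eq_range τ (M+1) (fun i hi => hM i (by omega))] at hd
      apply antitone_zero hτ
      exact (Finset.sum_eq_zero_iff.1 hd) 0 (by simp)
    have h1 : col 0 = 0 := by ext i; simp [col_apply]
    rw [h0, h1, SP_zero]; simp
  have hz := SP_cyclic_zero n ζ hζ τ (by omega) (by omega)
  obtain ⟨b, hb⟩ := exists_rows hτ
  have hb1 : 1 ≤ b := by
    by_contra hc
    have : τ = 0 := antitone_zero hτ (by by_contra h; have := (hb 0).1 h; omega)
    rw [this] at hd; simp at hd; omega
  have hmem : τ ∈ Finset.Icc (sh τ) τ := mem_strip.2 fun i => ⟨hτ (Nat.le_succ i), le_rfl⟩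
  simp only [SP] at hz
  rw [← Finset.add_sum_erase _ _ hmem, Nat.sub_self, pow_zero, mul_one, hζ.pow_eq_one] at hz
  have hrw : ∑ σ ∈ (Finset.Icc (sh τ) τ).erase τ, SP (fun i => - ζ ^ i) n σ *
      (-1) ^ (Finsupp.degree τ - Finsupp.degree σ) =
      ∑ σ ∈ (Finset.Icc (sh τ) τ).erase τ, if σ = col (Finsupp.degree σ) then 
      (-1) ^ (k - Finsupp.degree σ) else (0 : ℂ) := by
    refine Finset.sum_congr rfl fun σ hσ => ?_
    rw [Finset.mem_erase] at hσ
    have hlt : Finsupp.degree σ < k := by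
      rw [← hd]
      refine lt_of_le_of_ne (strip_degree hσ.2) fun heq => hσ.1 ?_
      obtain ⟨M, hM⟩ := exists_bound τ
      have hs := fun i => (mem_strip.1 hσ.2 i).2
      rw [degree_eq_range τ M hM, degree_eq_range σ M (fun i hi => by
        have := hs i; have := hM i hi; omega), Finset.sum_eq_sum_iff_of_le (fun i _ => hs i)] at heq
      ext i
      rcases Nat.lt_or_ge i M with h | h
      · exact heq i (Finset.mem_range.2 h)
      · have := hs i; have := hM i h; omega
    rw [ih _ hlt σ (strip_antitone hσ.2) rfl (by omega), hd]
    split_ifs <;> simp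
  rw [hrw, ← Finset.sum_filter] at hz
  -- degree of τ when all later rows are at most one
  by_cases hook : τ 1 ≤ 1
  · have hval : ∀ i, 1 ≤ i → τ i = if i < b then 1 else 0 := by
      intro i hi
      have h1 := hτ hi
      have h2 := hb i
      split_ifs with h <;> omega
    have hcolmem : ∀ j, col j ∈ Finset.Icc (sh τ) τ ↔ j = b ∨ j + 1 = b := by
      intro j
      rw [mem_strip]
      constructor
      · intro h
        simp only [col_apply] at h
        by_contra hc
        rcases Nat.lt_or_ge b j with h' | h'
        · have h1 := h b
          have h2 := hb b
          simp [h'] at h1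
          omega
        · have h1 := h j
          have h2 := hb (j + 1)
          simp at h1
          omega
      · intro h i
        have h1 := hval (i + 1) (by omega)
        have h2 := hb i
        have h3 := hτ (Nat.le_succ i)
        rw [col_apply]
        rw [Nat.succ_eq_add_one] at h3
        split_ifs at * <;> omega
    by_cases hc : τ = col k
    · have hbk : b = k := by
        have h1 := hb k; have h2 := hb b; have h3 := hb (k - 1)
        rw [hc] at h1 h2 h3
        simp only [col_apply] at h1 h2 h3
        split_ifs at * <;> omega
      have : (Finset.filter (fun σ => σ = col (Finsupp.degree σ))
          ((Finset.Icc (sh τ) τ).erase τ)) = {col (k - 1)} := by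
        ext σ
        rw [Finset.mem_filter, Finset.mem_erase, Finset.mem_singleton]
        constructor
        · rintro ⟨⟨h1, h2⟩, h3⟩
          rw [h3, hcolmem] at h2
          rcases h2 with h2 | h2
          · exact absurd (by rw [h3, hc, h2, hbk]) h1
          · rw [h3]; congr 1; omega
        · rintro rfl
          refine ⟨⟨?_, (hcolmem _).2 (by omega)⟩, by rw [degree_col]⟩
          intro h
          rw [hc] at h
          have := congrArg Finsupp.degree h
          rw [degree_col, degree_col] at this; omega
      rw [this, Finset.sum_singleton, degree_col, show k - (k - 1) = 1 by omega] at hz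
      rw [if_pos hc]
      linear_combination hz
    · have hne : ∀ j, col j ≠ τ := fun j h => hc (by rw [← hd, ← h, degree_col])
      have hbk : b < k := by
        have h1 := hb 0
        have h2 : τ 0 ≠ 1 := by
          intro h
          apply hne b
          symm
          apply ext_col
          intro i
          rcases Nat.eq_zero_or_pos i with rfl | hi
          · rw [h, if_pos (by omega)]
          · exact hval i hi
        have h3 : col b + Finsupp.single 0 1 ≤ τ := by
          intro i
          rcases Nat.eq_zero_or_pos i with rfl | hi
          · rw [Finsupp.add_apply, col_apply, if_pos (by omega), Finsupp.single_eq_same]; omega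
          · rw [hval i hi]
            simp [col_apply, Finsupp.single_apply]; omega
        have h4 := degree_mono' h3
        rw [map_add, degree_col, Finsupp.degree_single, hd] at h4
        omega
      have : (Finset.filter (fun σ => σ = col (Finsupp.degree σ))
          ((Finset.Icc (sh τ) τ).erase τ)) = {col b, col (b - 1)} := by
        ext σ
        rw [Finset.mem_filter, Finset.mem_erase, Finset.mem_insert, Finset.mem_singleton]
        constructor
        · rintro ⟨⟨h1, h2⟩, h3⟩
          rw [h3, hcolmem] at h2
          rcases h2 with h2 | h2
          · left; rw [h3, h2]
          · right; rw [h3]; congr 1; omega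
        · rintro (rfl | rfl)
          · exact ⟨⟨hne _, (hcolmem _).2 (by omega)⟩, by rw [degree_col]⟩
          · exact ⟨⟨hne _, (hcolmem _).2 (by omega)⟩, by rw [degree_col]⟩
      rw [this, Finset.sum_pair, degree_col, degree_col,
        show k - (b - 1) = k - b + 1 by omega, pow_succ] at hz
      · rw [if_neg hc]; linear_combination hz
      · intro h
        have := congrArg Finsupp.degree h
        rw [degree_col, degree_col] at this; omega
  · have : (Finset.filter (fun σ => σ = col (Finsupp.degree σ))
          ((Finset.Icc (sh τ) τ).erase τ)) = ∅ := by
      ext σ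
      simp only [Finset.mem_filter, Finset.mem_erase, Finset.notMem_empty, iff_false]
      rintro ⟨⟨h1, h2⟩, h3⟩
      have := (mem_strip.1 h2 0).1
      rw [h3, col_apply] at this
      simp at this
      split_ifs at this <;> omega
    rw [this, Finset.sum_empty, add_zero] at hz
    rw [hz, if_neg]
    rintro rfl
    rw [col_apply] at hook
    split_ifs at hook <;> omega

/-- SSYT of a shape given by a finsupp -/
def SS (ν : ℕ →₀ ℕ) (t : Cell → ℕ) : Prop :=
  (∀ c : Cell, ¬ c.2 < ν c.1 → t c = 0) ∧ (∀ c : Cell, c.2 < ν c.1 → 0 < t c) ∧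
  (∀ i j : ℕ, j + 1 < ν i → t (i, j) ≤ t (i, j + 1)) ∧
  (∀ i j : ℕ, j < ν (i + 1) → t (i, j) < t (i + 1, j))

/-- cells of a shape -/
noncomputable def cells (ν : ℕ →₀ ℕ) : Finset Cell :=
  (ν.support.sigma fun i => Finset.range (ν i)).map
    (Equiv.sigmaEquivProd ℕ ℕ).toEmbedding

lemma mem_cells {ν : ℕ →₀ ℕ} {c : Cell} : c ∈ cells ν ↔ c.2 < ν c.1 := by
  rcases c with ⟨i, j⟩
  simp only [cells, Finset.mem_map, Finset.mem_sigma, Finset.mem_range, Finsupp.mem_support_iff]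
  constructor
  · rintro ⟨⟨a, b⟩, ⟨_, h⟩, h2⟩
    simp at h2
    obtain ⟨rfl, rfl⟩ := h2
    exact h
  · intro h
    exact ⟨⟨i, j⟩, ⟨by simp at h ⊢; omega, h⟩, rfl⟩

lemma sum_cells {ν : ℕ →₀ ℕ} {M : Type*} [AddCommMonoid M] (g : Cell → M) :
    ∑ c ∈ cells ν, g c = ∑ i ∈ ν.support, ∑ j ∈ Finset.range (ν i), g (i, j) := by
  rw [cells, Finset.sum_map, Finset.sum_sigma]; rfl

lemma card_cells (ν : ℕ →₀ ℕ) : (cells ν).card = Finsupp.degree ν := by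
  rw [Finset.card_eq_sum_ones, sum_cells, Finsupp.degree_apply]
  simp

/-- SSYT with entries at most `m`. -/
def ASet (m : ℕ) (ν : ℕ →₀ ℕ) : Set (Cell → ℕ) := {t | SS ν t ∧ ∀ c, t c ≤ m}

lemma ASet_finite (m : ℕ) (ν : ℕ →₀ ℕ) : (ASet m ν).Finite := by
  have hinj : Set.InjOn (fun (t : Cell → ℕ) (c : cells ν) => t c.1) (ASet m ν) := by
    intro t ht t' ht' h
    ext c
    by_cases hc : c.2 < ν c.1
    · exact congrFun h ⟨c, mem_cells.2 hc⟩
    · rw [ht.1.1 c hc, ht'.1.1 c hc]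
  refine Set.Finite.of_finite_image (Set.Finite.subset
    (Set.Finite.pi' (t := fun _ : cells ν => Set.Iic m) fun _ => Set.finite_Iic m) ?_) hinj
  rintro _ ⟨t, ht, rfl⟩ c
  exact ht.2 _

/-- SSYT with entries at most `m`, finset. -/
noncomputable def AFin (m : ℕ) (ν : ℕ →₀ ℕ) : Finset (Cell → ℕ) := (ASet_finite m ν).toFinset

lemma mem_AFin {m : ℕ} {ν : ℕ →₀ ℕ} {t : Cell → ℕ} :
    t ∈ AFin m ν ↔ SS ν t ∧ ∀ c, t c ≤ m := by
  rw [AFin, Set.Finite.mem_toFinset]; rfl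

lemma filter_down (p : ℕ → Prop) (n : ℕ) (h : ∀ j, j + 1 < n → p (j + 1) → p j) (j : ℕ) :
    j < ((Finset.range n).filter p).card ↔ j < n ∧ p j := by
  induction n generalizing j with
  | zero => simp
  | succ n ih =>
    have ih' := ih (fun j hj => h j (by omega))
    rw [Finset.range_add_one, Finset.filter_insert]
    by_cases hp : p n
    · rw [if_pos hp, Finset.card_insert_of_notMem (by simp)]
      have hall : ∀ k, k ≤ n → p k := by
        intro k hk
        induction hk using Nat.decreasingInduction with
        | self => exact hp
        | of_succ k hk' ih2 => exact h k (by omega) ih2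
      have : (Finset.range n).filter p = Finset.range n := by
        rw [Finset.filter_true_of_mem]
        intro k hk
        exact hall k (by simp at hk; omega)
      rw [this, Finset.card_range]
      exact ⟨fun hj => ⟨hj, hall j (by omega)⟩, fun hj => hj.1⟩
    · rw [if_neg hp, ih']
      constructor
      · rintro ⟨a, b⟩; exact ⟨by omega, b⟩
      · rintro ⟨a, b⟩
        refine ⟨?_, b⟩
        rcases Nat.lt_succ_iff_lt_or_eq.1 a with h | rfl
        · exact h
        · exact absurd b hp

/-- the subshape of entries at most `m` -/
noncomputable def sub (m : ℕ) (ν : ℕ →₀ ℕ) (t : Cell → ℕ) : ℕ →₀ ℕ :=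
  Finsupp.onFinset ν.support
    (fun i => ((Finset.range (ν i)).filter fun j => t (i, j) ≤ m).card)
    (fun i h => by
      rw [Finsupp.mem_support_iff]; intro h0; simp [h0] at h)

lemma lt_sub {m : ℕ} {ν : ℕ →₀ ℕ} {t : Cell → ℕ} (ht : SS ν t) (i j : ℕ) :
    j < sub m ν t i ↔ j < ν i ∧ t (i, j) ≤ m := by
  simp only [sub, Finsupp.onFinset_apply]
  convert filter_down (fun j => t (i, j) ≤ m) (ν i) (fun j hj h => (ht.2.2.1 i j hj).trans h) j

lemma sub_strip {m : ℕ} {ν : ℕ →₀ ℕ} (hν : Antitone ν) {t : Cell → ℕ} (ht : SS ν t)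
    (hm : ∀ c, t c ≤ m + 1) : sub m ν t ∈ Finset.Icc (sh ν) ν := by
  rw [mem_strip]
  intro i
  constructor
  · by_contra hc
    rw [not_le] at hc
    have h1 := (lt_sub (m := m) ht i (sub m ν t i)).not.1 (lt_irrefl _)
    apply h1
    have h2 := ht.2.2.2 i _ hc
    have h3 := hm (i + 1, sub m ν t i)
    have h4 := hν (Nat.le_succ i)
    exact ⟨by rw [Nat.succ_eq_add_one] at h4; omega, by omega⟩
  · by_contra hc
    rw [not_le] at hc
    exact lt_irrefl _ ((lt_sub ht i _).1 hc).1

lemma SP_eq {R : Type*} [CommRing R] (x : ℕ → R) (m : ℕ) (ν : ℕ →₀ ℕ) (hν : Antitone ν) :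
    SP x m ν = ∑ t ∈ AFin m ν, ∏ c ∈ cells ν, x (t c) := by
  induction m generalizing ν with
  | zero =>
    simp only [SP]
    split_ifs with h
    · subst h
      have : AFin 0 0 = {fun _ => 0} := by
        ext t
        rw [mem_AFin, Finset.mem_singleton]
        constructor
        · rintro ⟨_, h⟩; ext c; have := h c; omega
        · rintro rfl; simp [SS]
      rw [this]
      have : cells 0 = ∅ := by ext c; simp [mem_cells]
      simp [this]
    · have : AFin 0 ν = ∅ := by
        ext t
        simp only [mem_AFin, Finset.notMem_empty, iff_false]
        rintro ⟨h1, h2⟩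
        apply h
        ext i
        by_contra hc
        have h3 := h1.2.1 (i, 0) (Nat.pos_of_ne_zero hc)
        have h4 := h2 (i, 0)
        omega
      simp [this]
  | succ m ih =>
    simp only [SP]
    rw [Finset.sum_congr rfl fun σ hσ => by rw [ih σ (strip_antitone hσ), Finset.sum_mul]]
    rw [Finset.sum_sigma']
    refine Finset.sum_bij' 
      (fun p _ => fun c => if c.2 < ν c.1 ∧ ¬ c.2 < p.1 c.1 then m + 1 else p.2 c)
      (fun t _ => ⟨sub m ν t, fun c => if t c ≤ m then t c else 0⟩) ?_ ?_ ?_ ?_ ?_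
    · rintro ⟨σ, t⟩ h
      simp only [Finset.mem_sigma, mem_strip, mem_AFin] at h ⊢
      obtain ⟨h1, ⟨⟨a, b, c, d⟩, e⟩⟩ := h
      refine ⟨⟨?_, ?_, ?_, ?_⟩, ?_⟩
      · intro q hq
        have := h1 q.1
        dsimp only
        rw [if_neg (by omega)]
        exact a q (by omega)
      · intro q hq
        dsimp only
        split_ifs with h
        · omega
        · exact b q (by tauto)
      · intro i j hj
        have h2 := h1 i
        have h3 := c i j
        have h4 := e (i, j)
        simp only
        split_ifs <;> omega
      · intro i j hj
        have h2 := h1 i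
        have h3 := d i j
        have h4 := e (i, j)
        have h5 := h1 (i + 1)
        simp only
        split_ifs <;> omega
      · intro q
        have := e q
        split_ifs <;> omega
    · intro t h
      rw [mem_AFin] at h
      rw [Finset.mem_sigma, mem_AFin]
      have hs := sub_strip hν h.1 h.2
      refine ⟨hs, ⟨?_, ?_, ?_, ?_⟩, ?_⟩
      · intro q hq
        dsimp only at hq ⊢
        rw [lt_sub h.1] at hq
        split_ifs with h'
        · exact h.1.1 q (by tauto)
        · rfl
      · intro q hq
        dsimp only at hq ⊢
        rw [lt_sub h.1] at hq
        rw [if_pos hq.2]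
        exact h.1.2.1 q hq.1
      · intro i j hj
        dsimp only at hj ⊢
        rw [lt_sub h.1] at hj
        have := h.1.2.2.1 i j hj.1
        rw [if_pos hj.2, if_pos (by omega)]
        exact this
      · intro i j hj
        dsimp only at hj ⊢
        rw [lt_sub h.1] at hj
        have := h.1.2.2.2 i j hj.1
        rw [if_pos hj.2, if_pos (by omega)]
        exact this
      · intro c
        dsimp only
        split_ifs <;> omega
    · rintro ⟨σ, t⟩ h
      simp only [Finset.mem_sigma, mem_strip, mem_AFin] at h
      obtain ⟨h1, ⟨⟨a, b, c, d⟩, e⟩⟩ := h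
      have e1 : sub m ν (fun c => if c.2 < ν c.1 ∧ ¬ c.2 < σ c.1 then m + 1 else t c) = σ := by
        ext i
        simp only [sub, Finsupp.onFinset_apply]
        have : (Finset.range (ν i)).filter (fun j => (if j < ν i ∧ ¬ j < σ i then m + 1 else
            t (i, j)) ≤ m) = Finset.range (σ i) := by
          ext j
          have := h1 i
          have h4 := e (i, j)
          rw [Finset.mem_filter, Finset.mem_range, Finset.mem_range]
          split_ifs <;> omega
        rw [this, Finset.card_range]
      have e2 : (fun c : Cell => if (if c.2 < ν c.1 ∧ ¬ c.2 < σ c.1 then m + 1 else t c) ≤ m then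
          (if c.2 < ν c.1 ∧ ¬ c.2 < σ c.1 then m + 1 else t c) else 0) = t := by
        ext q
        have h2 := a q
        have h4 := e q
        by_cases hq : q.2 < ν q.1 ∧ ¬ q.2 < σ q.1
        · simp [hq, h2 hq.2]
        · simp only [hq, if_false, h4, if_true]
      simp only [e1, e2]
    · intro t h
      rw [mem_AFin] at h
      ext q
      simp only [lt_sub h.1]
      have h2 := h.2 q
      have h3 := h.1.1 q
      have e : (q.1, q.2) = q := rfl
      rw [e]
      split_ifs <;> omega
    · rintro ⟨σ, t⟩ h
      simp only [Finset.mem_sigma, mem_AFin] at h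
      obtain ⟨h0, ⟨⟨a, b, c, d⟩, e⟩⟩ := h
      have h1 := mem_strip.1 h0
      have hsub : cells σ ⊆ cells ν := by
        intro q hq
        rw [mem_cells] at hq ⊢
        exact hq.trans_le (h1 _).2
      dsimp only
      rw [← Finset.prod_sdiff hsub, mul_comm]
      congr 1
      · rw [Finset.prod_congr rfl (g := fun _ => x (m + 1)), Finset.prod_const,
          Finset.card_sdiff_of_subset hsub, card_cells, card_cells]
        intro q hq
        rw [Finset.mem_sdiff, mem_cells, mem_cells] at hq
        rw [if_pos hq]
      · refine Finset.prod_congr rfl fun q hq => ?_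
        rw [mem_cells] at hq
        rw [if_neg (by tauto)]

/-- the sorted list of parts -/
def plist {N : ℕ} (lam : Nat.Partition N) : List ℕ := (lam.parts.sort (· ≤ ·)).reverse

lemma plist_coe {N : ℕ} (lam : Nat.Partition N) : (plist lam : Multiset ℕ) = lam.parts := by
  rw [plist, Multiset.coe_reverse, Multiset.sort_eq]

lemma plist_pos {N : ℕ} (lam : Nat.Partition N) : ∀ a ∈ plist lam, 0 < a := by
  intro a ha
  apply lam.parts_pos
  rw [← plist_coe]; exact ha

lemma plist_sorted {N : ℕ} (lam : Nat.Partition N) : (plist lam).Pairwise (· ≥ ·) := by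
  rw [plist, List.pairwise_reverse]
  exact Multiset.pairwise_sort _ _

lemma rowLen_eq {N : ℕ} (lam : Nat.Partition N) (i : ℕ) : rowLen lam i = (plist lam).getD i 0 :=
  rfl

lemma getD_antitone (l : List ℕ) (h : l.Pairwise (· ≥ ·)) : Antitone fun i => l.getD i 0 := by
  apply antitone_nat_of_succ_le
  intro i
  induction l generalizing i with
  | nil => simp
  | cons a l ih =>
    rw [List.pairwise_cons] at h
    cases i with
    | zero =>
      simp only [List.getD_cons_zero, List.getD_cons_succ]
      cases l with
      | nil => simp
      | cons b l => simpa using h.1 b (by simp)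
    | succ i => simpa using ih h.2 i

lemma getD_sum (l : List ℕ) : ∑ i ∈ Finset.range l.length, l.getD i 0 = l.sum := by
  induction l with
  | nil => simp
  | cons a l ih =>
    rw [List.length_cons, Finset.sum_range_succ']
    simp only [List.getD_cons_zero, List.getD_cons_succ, List.sum_cons, ih]
    omega

lemma getD_inj (l l' : List ℕ) (h : ∀ a ∈ l, 0 < a) (h' : ∀ a ∈ l', 0 < a)
    (e : ∀ i, l.getD i 0 = l'.getD i 0) : l = l' := by
  induction l generalizing l' with
  | nil =>
    cases l' with
    | nil => rfl
    | cons a l' => have := e 0; have := h' a (by simp); simp at *; omega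
  | cons b l ih =>
    cases l' with
    | nil => have := e 0; have := h b (by simp); simp at *; omega
    | cons a l' =>
      have h0 := e 0
      simp at h0
      rw [h0, ih l' (fun a ha => h a (by simp [ha])) (fun a ha => h' a (by simp [ha]))
        (fun i => by simpa using e (i + 1))]

/-- shape of a partition -/
noncomputable def shape {N : ℕ} (lam : Nat.Partition N) : ℕ →₀ ℕ :=
  Finsupp.onFinset (Finset.range (plist lam).length) (rowLen lam) (fun i h => by
    rw [Finset.mem_range]; by_contra hc
    exact h (by rw [rowLen_eq, List.getD_eq_default _ _ (by omega)]))

lemma shape_apply {N : ℕ} (lam : Nat.Partition N) (i : ℕ) : shape lam i = rowLen lam i := rfl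

lemma shape_antitone {N : ℕ} (lam : Nat.Partition N) : Antitone (shape lam) :=
  getD_antitone _ (plist_sorted lam)

lemma shape_degree {N : ℕ} (lam : Nat.Partition N) : Finsupp.degree (shape lam) = N := by
  rw [degree_eq_range _ (plist lam).length]
  · have := getD_sum (plist lam)
    simp only [shape_apply, rowLen_eq]
    rw [this, ← Multiset.sum_coe, plist_coe, lam.parts_sum]
  · intro i hi
    rw [shape_apply, rowLen_eq, List.getD_eq_default _ _ (by omega)]

lemma shape_inj {N : ℕ} {lam lam' : Nat.Partition N} (h : shape lam = shape lam') :
    lam = lam' := by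
  have : plist lam = plist lam' := getD_inj _ _ (plist_pos _) (plist_pos _) fun i =>
    DFunLike.congr_fun h i
  apply Nat.Partition.ext
  rw [← plist_coe, ← plist_coe, this]

lemma shape_eq_of_list {N : ℕ} (lam : Nat.Partition N) (l : List ℕ)
    (hl : l.Pairwise (· ≥ ·)) (h : lam.parts = l) : plist lam = l := by
  apply List.Perm.eq_of_pairwise (le := (· ≥ ·)) _ (plist_sorted lam) hl
  · rw [← Multiset.coe_eq_coe, plist_coe, h]
  · intro a b _ _ h1 h2; exact le_antisymm h2 h1

lemma getD_map_range (τ : ℕ → ℕ) (b i : ℕ) :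
    ((List.range b).map τ).getD i 0 = if i < b then τ i else 0 := by
  split_ifs with h
  · rw [List.getD_eq_getElem _ _ (by simpa using h)]; simp
  · rw [List.getD_eq_default _ _ (by simpa using h)]

lemma shape_surj {N : ℕ} (τ : ℕ →₀ ℕ) (hτ : Antitone τ) (hd : Finsupp.degree τ = N) :
    ∃ lam : Nat.Partition N, shape lam = τ := by
  obtain ⟨b, hb⟩ := exists_rows hτ
  have hsum : ((List.range b).map τ).sum = N := by
    rw [← hd, degree_eq_range τ b (fun i hi => by by_contra h; have := (hb i).1 h; omega),
      ← getD_sum, List.length_map, List.length_range]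
    refine Finset.sum_congr rfl fun i hi => ?_
    rw [getD_map_range, if_pos (Finset.mem_range.1 hi)]
  let lam : Nat.Partition N :=
    { parts := ((List.range b).map τ : List ℕ)
      parts_pos := by
        intro a ha
        rw [Multiset.mem_coe, List.mem_map] at ha
        obtain ⟨i, hi, rfl⟩ := ha
        exact Nat.pos_of_ne_zero ((hb i).2 (List.mem_range.1 hi))
      parts_sum := by rw [Multiset.sum_coe, hsum] }
  refine ⟨lam, ?_⟩
  have hp : plist lam = (List.range b).map τ := shape_eq_of_list lam _ (by
    rw [List.pairwise_map]
    exact (List.pairwise_lt_range).imp fun h => hτ h.le) rfl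
  ext i
  rw [shape_apply, rowLen_eq, hp, getD_map_range]
  split_ifs with h
  · rfl
  · by_contra hc; exact h ((hb i).1 (Ne.symm hc))

lemma shape_twoOne (C D : ℕ) : shape (twoOne C D) = col C + col (C + D) := by
  have hp : plist (twoOne C D) = (List.range (C + D)).map (fun i => (col C + col (C + D)) i) := by
    apply shape_eq_of_list
    · rw [List.pairwise_map]
      refine (List.pairwise_lt_range).imp fun h => ?_
      simp only [Finsupp.add_apply, col_apply]
      split_ifs <;> omega
    · rw [List.range_add, List.map_append, List.map_map, ← Multiset.coe_add]
      show Multiset.replicate C 2 + Multiset.replicate D 1 = _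
      congr 1
      · rw [← Multiset.coe_replicate]
        congr 1
        symm
        rw [List.eq_replicate_iff]
        refine ⟨by simp, ?_⟩
        intro a ha
        rw [List.mem_map] at ha
        obtain ⟨i, hi, rfl⟩ := ha
        rw [List.mem_range] at hi
        rw [Finsupp.add_apply, col_apply, col_apply, if_pos hi, if_pos (by omega)]
      · rw [← Multiset.coe_replicate]
        congr 1
        symm
        rw [List.eq_replicate_iff]
        refine ⟨by simp, ?_⟩
        intro a ha
        rw [List.mem_map] at ha
        obtain ⟨i, hi, rfl⟩ := ha
        rw [List.mem_range] at hi
        simp only [Function.comp]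
        rw [Finsupp.add_apply, col_apply, col_apply, if_neg (by omega), if_pos (by omega)]
  ext i
  rw [shape_apply, rowLen_eq, hp, getD_map_range]
  split_ifs with h
  · rfl
  · rw [Finsupp.add_apply, col_apply, col_apply, if_neg (by omega), if_neg (by omega)]

/-- weight of a filling -/
noncomputable def wt (ν : ℕ →₀ ℕ) (t : Cell → ℕ) : ℕ →₀ ℕ :=
  ∑ c ∈ cells ν, Finsupp.single (t c) 1

lemma wt_apply {N : ℕ} (lam : Nat.Partition N) (t : Cell → ℕ) (i : ℕ) :
    Nat.card {c : Cell // c ∈ diag lam ∧ t c = i} = wt (shape lam) t i := by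
  have : wt (shape lam) t i = ((cells (shape lam)).filter fun c => t c = i).card := by
    simp only [wt, Finsupp.finsetSum_apply, Finsupp.single_apply]
    rw [Finset.card_filter]
  rw [this, Nat.subtype_card]
  intro c
  rw [Finset.mem_filter, mem_cells]; rfl

lemma SS_iff {N : ℕ} (lam : Nat.Partition N) (t : Cell → ℕ) : IsSSYT lam t ↔ SS (shape lam) t :=
  Iff.rfl

lemma schurFn_eq_card {N : ℕ} (lam : Nat.Partition N) (μ : ℕ →₀ ℕ) (m : ℕ)
    (hμ : ∀ i, m < i → μ i = 0) :
    schurFn lam μ = ((AFin m (shape lam)).filter fun t => wt (shape lam) t = μ).card := by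
  rw [schurFn]
  congr 1
  apply Nat.subtype_card
  intro t
  rw [Finset.mem_filter, mem_AFin, SS_iff]
  simp only [wt_apply]
  constructor
  · rintro ⟨⟨h1, _⟩, h2⟩
    exact ⟨h1, fun i => DFunLike.congr_fun h2 i⟩
  · rintro ⟨h1, h2⟩
    refine ⟨⟨h1, fun c => ?_⟩, Finsupp.ext h2⟩
    by_contra hc
    rw [not_le] at hc
    have h3 := h2 (t c)
    rw [hμ _ hc, ← wt_apply] at h3
    have hmem : c ∈ diag lam := by
      by_contra hn
      have := h1.1 c hn
      omega
    have hfin : Finite {c' : Cell // c' ∈ diag lam ∧ t c' = t c} :=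
      Set.Finite.subset (cells (shape lam)).finite_toSet fun c' hc' => by
        rw [Finset.mem_coe, mem_cells]; exact hc'.1
    rw [Finite.card_eq_zero_iff] at h3
    exact h3.elim ⟨c, hmem, rfl⟩

lemma schurFn_eq {N : ℕ} (lam : Nat.Partition N) (μ : ℕ →₀ ℕ) (m : ℕ)
    (hμ : ∀ i, m < i → μ i = 0) :
    schurFn lam μ = MvPolynomial.coeff μ
      (SP (fun i => (MvPolynomial.X i : MvPolynomial ℕ ℚ)) m (shape lam)) := by
  rw [schurFn_eq_card lam μ m hμ, SP_eq _ _ _ (shape_antitone lam), MvPolynomial.coeff_sum,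
    Finset.card_filter, Nat.cast_sum]
  refine Finset.sum_congr rfl fun t _ => ?_
  have : ∏ c ∈ cells (shape lam), (MvPolynomial.X (t c) : MvPolynomial ℕ ℚ) =
      MvPolynomial.monomial (wt (shape lam) t) 1 := by
    rw [wt, MvPolynomial.monomial_sum_one]; rfl
  rw [this, MvPolynomial.coeff_monomial]
  split_ifs <;> simp

lemma schurFn_exists {N : ℕ} (lam : Nat.Partition N) (μ : ℕ → ℕ) (h : schurFn lam μ ≠ 0) :
    ∃ t, SS (shape lam) t ∧ μ = wt (shape lam) t := by
  rw [schurFn, Nat.cast_ne_zero] at h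
  have := (Nat.card_ne_zero.1 h).1
  obtain ⟨⟨t, h1, h2⟩⟩ := this
  exact ⟨t, h1, by ext i; rw [← h2 i, wt_apply]⟩

/-- weight of a shape: `x_{i+1}` to the power of the `i`-th row -/
noncomputable def up (ν : ℕ →₀ ℕ) : ℕ →₀ ℕ := Finsupp.mapDomain (fun i => i + 1) ν

lemma up_succ (ν : ℕ →₀ ℕ) (i : ℕ) : up ν (i + 1) = ν i :=
  Finsupp.mapDomain_apply (fun a b h => by simpa using h) ν i

lemma up_zero (ν : ℕ →₀ ℕ) : up ν 0 = 0 :=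
  Finsupp.mapDomain_of_notMem_range _ _ (by simp)

lemma up_sh (μ : ℕ →₀ ℕ) (h : μ 0 = 0) : up (sh μ) = μ := by
  ext i
  cases i with
  | zero => rw [up_zero, h]
  | succ i => rw [up_succ, sh_apply]

lemma degree_up (ν : ℕ →₀ ℕ) : Finsupp.degree (up ν) = Finsupp.degree ν := by
  obtain ⟨M, hM⟩ := exists_bound ν
  rw [degree_eq_range ν M hM, degree_eq_range (up ν) (M + 1), Finset.sum_range_succ', up_zero]
  · simp [up_succ]
  · intro i hi
    obtain ⟨j, rfl⟩ : ∃ j, i = j + 1 := ⟨i - 1, by omega⟩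
    rw [up_succ, hM _ (by omega)]

/-- the statistic `∑ k μ_k` -/
noncomputable def Wt : (ℕ →₀ ℕ) →ₗ[ℕ] ℕ := Finsupp.linearCombination ℕ (fun k : ℕ => k)

lemma Wt_wt (ν : ℕ →₀ ℕ) (t : Cell → ℕ) : Wt (wt ν t) = ∑ c ∈ cells ν, t c := by
  simp [Wt, wt, map_sum, Finsupp.linearCombination_single]

lemma up_eq_wt (ν : ℕ →₀ ℕ) (t : Cell → ℕ) (ht : ∀ c ∈ cells ν, t c = c.1 + 1) :
    up ν = wt ν t := by
  rw [wt, Finset.sum_congr rfl fun c hc => by rw [ht c hc], sum_cells, up, Finsupp.mapDomain,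
    Finsupp.sum]
  simp

lemma row_le {ν : ℕ →₀ ℕ} (hν : Antitone ν) {t : Cell → ℕ} (ht : SS ν t) (i j : ℕ)
    (h : j < ν i) : i + 1 ≤ t (i, j) := by
  induction i with
  | zero => exact ht.2.1 (0, j) h
  | succ i ih =>
    have h1 := hν (Nat.le_succ i)
    have h2 := ih (lt_of_lt_of_le h h1)
    have h3 := ht.2.2.2 i j h
    omega

lemma Wt_up (ν : ℕ →₀ ℕ) : Wt (up ν) = ∑ c ∈ cells ν, (c.1 + 1) := by
  rw [up_eq_wt ν (fun c => c.1 + 1) (fun _ _ => rfl), Wt_wt]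

lemma kostka_le {N : ℕ} (κ κ' : Nat.Partition N) (h : schurFn κ' (up (shape κ)) ≠ 0) :
    Wt (up (shape κ')) ≤ Wt (up (shape κ)) ∧
    (Wt (up (shape κ')) = Wt (up (shape κ)) → κ' = κ) ∧
    (∀ r, shape κ r = 0 → shape κ' r = 0) := by
  obtain ⟨t, ht, h2⟩ := schurFn_exists _ _ h
  have h3 : up (shape κ) = wt (shape κ') t := DFunLike.coe_injective h2
  have hle : ∀ c ∈ cells (shape κ'), c.1 + 1 ≤ t c := fun c hc =>
    row_le (shape_antitone κ') ht c.1 c.2 (mem_cells.1 hc)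
  refine ⟨?_, ?_, ?_⟩
  · rw [h3, Wt_wt, Wt_up]
    exact Finset.sum_le_sum hle
  · intro he
    rw [h3, Wt_wt, Wt_up, Finset.sum_eq_sum_iff_of_le hle] at he
    rw [← up_eq_wt _ t (fun c hc => (he c hc).symm)] at h3
    apply shape_inj
    ext i
    rw [← up_succ, ← h3, up_succ]
  · intro r hr
    by_contra hc
    have h4 : (r, 0) ∈ cells (shape κ') := mem_cells.2 (Nat.pos_of_ne_zero hc)
    have h5 := hle _ h4
    have h6 : wt (shape κ') t (t (r, 0)) ≠ 0 := by
      simp only [wt, Finsupp.finsetSum_apply]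
      intro h0
      rw [Finset.sum_eq_zero_iff] at h0
      have := h0 _ h4
      simp at this
    rw [← h3] at h6
    obtain ⟨j, hj⟩ : ∃ j, t (r, 0) = j + 1 := ⟨t (r, 0) - 1, by simp at h5; omega⟩
    rw [hj, up_succ] at h6
    have := shape_antitone κ (show r ≤ j by simp at h5; omega)
    omega

lemma kostka_one {N : ℕ} (κ : Nat.Partition N) : schurFn κ (up (shape κ)) = 1 := by
  rw [schurFn, Nat.cast_eq_one, Nat.card_eq_one_iff_unique]
  let t0 : Cell → ℕ := fun c => if c ∈ cells (shape κ) then c.1 + 1 else 0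
  have hmc : ∀ i j, (i, j) ∈ cells (shape κ) ↔ j < shape κ i := fun i j => mem_cells
  have h0 : up (shape κ) = wt (shape κ) t0 := up_eq_wt _ _ fun c hc => by simp only [t0, if_pos hc]
  have ha := shape_antitone κ
  constructor
  · constructor
    have key : ∀ t, SS (shape κ) t → (∀ i, Nat.card {c : Cell // c ∈ diag κ ∧ t c = i} =
        up (shape κ) i) → t = t0 := by
      intro t ht h2
      have h3 : wt (shape κ) t = up (shape κ) := by
        ext i; rw [← h2 i, wt_apply]
      have hle : ∀ c ∈ cells (shape κ), c.1 + 1 ≤ t c := fun c hc =>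
        row_le ha ht c.1 c.2 (mem_cells.1 hc)
      have h4 : Wt (up (shape κ)) = Wt (wt (shape κ) t) := by rw [h3]
      rw [Wt_wt, Wt_up, Finset.sum_eq_sum_iff_of_le hle] at h4
      ext c
      by_cases hc : c ∈ cells (shape κ)
      · simp only [t0, if_pos hc]; exact (h4 c hc).symm
      · simp only [t0, if_neg hc]; exact ht.1 c (fun h => hc (mem_cells.2 h))
    rintro ⟨t, h1, h2⟩ ⟨t', h1', h2'⟩
    exact Subtype.ext ((key t h1 h2).trans (key t' h1' h2').symm)
  · refine ⟨⟨t0, ⟨?_, ?_, ?_, ?_⟩, ?_⟩⟩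
    · intro c hc
      simp only [t0]
      rw [if_neg]
      rw [mem_cells]; exact hc
    · intro c hc
      simp only [t0]
      rw [if_pos]
      · omega
      · rw [mem_cells]; exact hc
    · intro i j h
      have h' : j + 1 < shape κ i := h
      simp only [t0]
      rw [if_pos ((hmc _ _).2 (by omega)), if_pos ((hmc _ _).2 h')]
    · intro i j h
      have h' : j < shape κ (i + 1) := h
      have := ha (Nat.le_succ i)
      rw [Nat.succ_eq_add_one] at this
      simp only [t0]
      rw [if_pos ((hmc _ _).2 (by omega)), if_pos ((hmc _ _).2 h')]
      omega
    · intro i; rw [wt_apply, h0]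

lemma tri {N : ℕ} (Q : Nat.Partition N → Prop) (c : Nat.Partition N → ℚ)
    (hQ : ∀ κ ν, Q κ → schurFn ν (up (shape κ)) ≠ 0 → Q ν)
    (h : ∀ κ, Q κ → ∑ ν, c ν * schurFn ν (up (shape κ)) = 0) (κ : Nat.Partition N) (hκ : Q κ) :
    c κ = 0 := by
  obtain ⟨w, hw⟩ : ∃ w, Wt (up (shape κ)) = w := ⟨_, rfl⟩
  induction w using Nat.strong_induction_on generalizing κ with
  | _ w ih =>
    have h1 := h κ hκ
    rw [Finset.sum_eq_single κ, kostka_one, mul_one] at h1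
    · exact h1
    · intro ν _ hne
      by_cases h0 : schurFn ν (up (shape κ)) = 0
      · rw [h0, mul_zero]
      · obtain ⟨a, b, _⟩ := kostka_le _ _ h0
        have : Wt (up (shape ν)) ≠ Wt (up (shape κ)) := fun e => hne (b e)
        rw [ih (Wt (up (shape ν))) (by omega) ν (hQ κ ν hκ h0) rfl, zero_mul]
    · simp

lemma solve {N : ℕ} (F : (ℕ → ℕ) → ℚ) : ∃ c : Nat.Partition N → ℚ, ∀ κ : Nat.Partition N,
    F (up (shape κ)) = ∑ ν, c ν * schurFn ν (up (shape κ)) := by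
  let L : (Nat.Partition N → ℚ) →ₗ[ℚ] (Nat.Partition N → ℚ) :=
    { toFun := fun c κ => ∑ ν, c ν * schurFn ν (up (shape κ))
      map_add' := fun c d => by ext κ; simp [add_mul, Finset.sum_add_distrib]
      map_smul' := fun a c => by ext κ; simp [Finset.mul_sum, mul_assoc] }
  have hinj : Function.Injective L := by
    rw [injective_iff_map_eq_zero]
    intro c hc
    ext κ
    exact tri (fun _ => True) c (fun _ _ _ _ => trivial) (fun κ _ => congrFun hc κ) κ trivial
  obtain ⟨c, hc⟩ := LinearMap.injective_iff_surjective.1 hinj (fun κ => F (up (shape κ)))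
  exact ⟨c, fun κ => (congrFun hc κ).symm⟩

/-- symmetric, homogeneous -/
def SymHom (N : ℕ) (F : (ℕ → ℕ) → ℚ) : Prop :=
  (∀ μ, F μ ≠ 0 → ∃ μ' : ℕ →₀ ℕ, μ = μ' ∧ μ' 0 = 0 ∧ Finsupp.degree μ' = N) ∧
  (∀ (μ : ℕ →₀ ℕ) (k : ℕ), 1 ≤ k → F (Finsupp.mapDomain (Equiv.swap k (k + 1)) μ) = F μ)

lemma Wt_swap (μ : ℕ →₀ ℕ) (k : ℕ) (h : μ k < μ (k + 1)) :
    Wt (Finsupp.mapDomain (Equiv.swap k (k + 1)) μ) < Wt μ := by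
  obtain ⟨M, hM⟩ := exists_bound μ
  have e : ∀ v : ℕ → ℕ, Finsupp.linearCombination ℕ v μ =
      ∑ i ∈ Finset.range (M + k + 2), μ i * v i := by
    intro v
    rw [Finsupp.linearCombination_apply, Finsupp.sum_of_support_subset (s := Finset.range (M + k + 2))]
    · rfl
    · intro i hi
      rw [Finset.mem_range]; by_contra hc
      exact (Finsupp.mem_support_iff.1 hi) (hM i (by omega))
    · simp
  rw [Wt, Finsupp.linearCombination_mapDomain, e, e]
  zify
  rw [← sub_neg, ← Finset.sum_sub_distrib]
  rw [← Finset.sum_subset (s₁ := {k, k + 1})]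
  · rw [Finset.sum_pair (by omega)]
    simp
    nlinarith
  · intro i; simp; omega
  · intro i _ hi
    simp only [Finset.mem_insert, Finset.mem_singleton, not_or] at hi
    simp [Equiv.swap_apply_of_ne_of_ne hi.1 hi.2]

lemma SymHom.zero {N : ℕ} {F : (ℕ → ℕ) → ℚ} (hF : SymHom N F)
    (h : ∀ κ : Nat.Partition N, F (up (shape κ)) = 0) (μ : ℕ → ℕ) : F μ = 0 := by
  by_contra hne
  obtain ⟨μ', rfl, -, -⟩ := hF.1 μ hne
  obtain ⟨w, hw⟩ : ∃ w, Wt μ' = w := ⟨_, rfl⟩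
  induction w using Nat.strong_induction_on generalizing μ' with
  | _ w ih =>
    by_cases hk : ∃ k, 1 ≤ k ∧ μ' k < μ' (k + 1)
    · obtain ⟨k, hk1, hk2⟩ := hk
      refine ih _ ?_ _ (by rwa [hF.2 μ' k hk1]) rfl
      rw [← hw]
      exact Wt_swap μ' k hk2
    · push Not at hk
      obtain ⟨μ2, h1, h2, h3⟩ := hF.1 _ hne
      obtain rfl : μ' = μ2 := DFunLike.coe_injective h1
      have ha : Antitone (sh μ') := antitone_nat_of_succ_le fun i => by
        rw [sh_apply, sh_apply]; exact hk (i + 1) (by omega)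
      obtain ⟨κ, hκ⟩ := shape_surj (N := N) (sh μ') ha (by rw [← degree_up, up_sh _ h2, h3])
      apply hne
      rw [← up_sh _ h2, ← hκ, h]

lemma schurFn_symHom {N : ℕ} (lam : Nat.Partition N) : SymHom N (schurFn lam) := by
  constructor
  · intro μ h
    obtain ⟨t, ht, rfl⟩ := schurFn_exists _ _ h
    refine ⟨_, rfl, ?_, ?_⟩
    · simp only [wt, Finsupp.finsetSum_apply]
      refine Finset.sum_eq_zero fun c hc => ?_
      have := ht.2.1 c (mem_cells.1 hc)
      rw [Finsupp.single_apply, if_neg (by omega)]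
    · rw [wt, map_sum]
      simp [Finsupp.degree_single, card_cells, shape_degree]
  · intro μ k hk
    obtain ⟨M, hM⟩ := exists_bound μ
    set s := Equiv.swap k (k + 1) with hs
    have hm : ∀ i, Finsupp.mapDomain s μ i = μ (s i) := by
      intro i
      conv_lhs => rw [← Equiv.swap_apply_self k (k + 1) i, ← hs]
      exact Finsupp.mapDomain_apply s.injective μ (s i)
    rw [schurFn_eq lam μ (M + k + 1) (fun i hi => hM i (by omega)),
      schurFn_eq lam (Finsupp.mapDomain s μ) (M + k + 1) (fun i hi => by
        rw [hm, hs, Equiv.swap_apply_of_ne_of_ne (by omega) (by omega), hM _ (by omega)])]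
    conv_lhs => rw [← SP_swap _ (M + k + 1) k hk (by omega)]
    have := SP_map (MvPolynomial.rename s : MvPolynomial ℕ ℚ →ₐ[ℚ] MvPolynomial ℕ ℚ).toRingHom
      (fun i => (MvPolynomial.X i : MvPolynomial ℕ ℚ)) (M + k + 1) (shape lam)
    simp only [AlgHom.toRingHom_eq_coe, RingHom.coe_coe, MvPolynomial.rename_X] at this
    rw [← hs, ← this, MvPolynomial.coeff_rename_mapDomain _ s.injective]

/-- weight of a colouring -/
noncomputable def cwt {V : Type*} [Fintype V] (f : V → ℕ) : ℕ →₀ ℕ :=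
  ∑ v, Finsupp.single (f v) 1

lemma cwt_apply {V : Type*} [Fintype V] (f : V → ℕ) (i : ℕ) :
    Nat.card {v : V // f v = i} = cwt f i := by
  simp only [cwt, Finsupp.finsetSum_apply, Finsupp.single_apply]
  rw [← Finset.card_filter, Nat.subtype_card]
  simp

lemma XCoeff_symHom {V : Type*} [Fintype V] (G : SimpleGraph V) :
    SymHom (Fintype.card V) (XCoeff G) := by
  constructor
  · intro μ h
    rw [XCoeff, Nat.cast_ne_zero] at h
    obtain ⟨⟨f, h1, h2⟩⟩ := (Nat.card_ne_zero.1 h).1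
    refine ⟨cwt f, by ext i; rw [← h2, cwt_apply], ?_, ?_⟩
    · simp only [cwt, Finsupp.finsetSum_apply]
      refine Finset.sum_eq_zero fun v _ => ?_
      have := h1.1 v
      rw [Finsupp.single_apply, if_neg (by omega)]
    · rw [cwt, map_sum]
      simp [Finsupp.degree_single]
  · intro μ k hk
    set s := Equiv.swap k (k + 1) with hs
    have hm : ∀ i, Finsupp.mapDomain s μ (s i) = μ i := fun i =>
      Finsupp.mapDomain_apply s.injective μ i
    have hss : ∀ i, s (s i) = i := Equiv.swap_apply_self k (k + 1)
    have hpos : ∀ i, 0 < i → 0 < s i := by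
      intro i hi
      rw [Nat.pos_iff_ne_zero]
      intro h0
      have := hss i
      rw [h0, hs, Equiv.swap_apply_of_ne_of_ne (by omega) (by omega)] at this
      omega
    have hprop : ∀ f, IsProperColoring G f → IsProperColoring G (fun v => s (f v)) := by
      rintro f ⟨h1, h2⟩
      exact ⟨fun v => hpos _ (h1 v), fun u v huv h => h2 u v huv (s.injective h)⟩
    rw [XCoeff, XCoeff, Nat.cast_inj]
    refine Nat.card_congr ⟨fun f => ⟨fun v => s (f.1 v), hprop _ f.2.1, fun i => ?_⟩,
      fun f => ⟨fun v => s (f.1 v), hprop _ f.2.1, fun i => ?_⟩, ?_, ?_⟩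
    · rw [← hm i, ← f.2.2 (s i)]
      refine Nat.card_congr (Equiv.subtypeEquivRight fun v => ?_)
      constructor
      · intro h; rw [← h, hss]
      · intro h; show s (f.1 v) = i; rw [h, hss]
    · have := hm (s i)
      rw [hss] at this
      rw [this, ← f.2.2 (s i)]
      refine Nat.card_congr (Equiv.subtypeEquivRight fun v => ?_)
      constructor
      · intro h; rw [← h, hss]
      · intro h; show s (f.1 v) = i; rw [h, hss]
    · intro f; apply Subtype.ext; funext v; exact hss _
    · intro f; apply Subtype.ext; funext v; exact hss _

lemma SymHom.expand {N : ℕ} {F : (ℕ → ℕ) → ℚ} (hF : SymHom N F) :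
    ∃ c : Nat.Partition N →₀ ℚ, ∀ μ, F μ = c.sum fun ν a => a * schurFn ν μ := by
  obtain ⟨c, hc⟩ := solve (N := N) F
  refine ⟨Finsupp.equivFunOnFinite.symm c, fun μ => ?_⟩
  rw [Finsupp.sum_fintype _ _ (by simp)]
  simp only [Finsupp.equivFunOnFinite_symm_apply_apply]
  have hD : SymHom N (fun μ => F μ - ∑ ν, c ν * schurFn ν μ) := by
    constructor
    · intro μ h
      by_cases h0 : F μ = 0
      · simp only [h0, zero_sub, neg_ne_zero] at h
        obtain ⟨ν, _, hν⟩ := Finset.exists_ne_zero_of_sum_ne_zero h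
        exact (schurFn_symHom ν).1 μ (right_ne_zero_of_mul hν)
      · exact hF.1 μ h0
    · intro μ k hk
      simp only [hF.2 μ k hk, (schurFn_symHom _).2 μ k hk]
  have := hD.zero (fun κ => by simp only [hc κ, sub_self]) μ
  exact sub_eq_zero.1 this

lemma SP_coeff_zero {N : ℕ} (lam : Nat.Partition N) (μ : ℕ →₀ ℕ) (m i : ℕ) (hi : m < i)
    (hμ : μ i ≠ 0) : MvPolynomial.coeff μ
      (SP (fun i => (MvPolynomial.X i : MvPolynomial ℕ ℚ)) m (shape lam)) = 0 := by
  rw [SP_eq _ _ _ (shape_antitone lam), MvPolynomial.coeff_sum]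
  refine Finset.sum_eq_zero fun t ht => ?_
  have : ∏ c ∈ cells (shape lam), (MvPolynomial.X (t c) : MvPolynomial ℕ ℚ) =
      MvPolynomial.monomial (wt (shape lam) t) 1 := by
    rw [wt, MvPolynomial.monomial_sum_one]; rfl
  rw [this, MvPolynomial.coeff_monomial, if_neg]
  rintro rfl
  apply hμ
  simp only [wt, Finsupp.finsetSum_apply]
  refine Finset.sum_eq_zero fun c _ => ?_
  have := (mem_AFin.1 ht).2 c
  rw [Finsupp.single_apply, if_neg (by omega)]

/-- proper colourings with colours in `1..n` -/
noncomputable def CP {V : Type*} [Fintype V] (G : SimpleGraph V) (n : ℕ) : Finset (V → ℕ) :=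
  (Fintype.piFinset fun _ : V => Finset.Icc 1 n).filter (IsProperColoring G)

lemma mem_CP {V : Type*} [Fintype V] (G : SimpleGraph V) (n : ℕ) (f : V → ℕ) :
    f ∈ CP G n ↔ IsProperColoring G f ∧ ∀ v, f v ≤ n := by
  simp only [CP, Finset.mem_filter, Fintype.mem_piFinset, Finset.mem_Icc]
  constructor
  · rintro ⟨h, h'⟩; exact ⟨h', fun v => (h v).2⟩
  · rintro ⟨h, h'⟩; exact ⟨fun v => ⟨h.1 v, h' v⟩, h⟩

lemma cwt_ne {V : Type*} [Fintype V] (f : V → ℕ) (v : V) : cwt f (f v) ≠ 0 := by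
  rw [← cwt_apply]
  have : Nonempty {u : V // f u = f v} := ⟨⟨v, rfl⟩⟩
  exact Nat.card_pos.ne'

lemma prod_X_cwt {V : Type*} [Fintype V] (f : V → ℕ) :
    ∏ v, (MvPolynomial.X (f v) : MvPolynomial ℕ ℚ) = MvPolynomial.monomial (cwt f) 1 := by
  rw [cwt, MvPolynomial.monomial_sum_one]; rfl

lemma XCoeff_eq {V : Type*} [Fintype V] (G : SimpleGraph V) (μ : ℕ →₀ ℕ) (n : ℕ)
    (hμ : ∀ i, n < i → μ i = 0) :
    XCoeff G μ = MvPolynomial.coeff μ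
      (∑ f ∈ CP G n, ∏ v, (MvPolynomial.X (f v) : MvPolynomial ℕ ℚ)) := by
  rw [MvPolynomial.coeff_sum]
  simp only [prod_X_cwt, MvPolynomial.coeff_monomial]
  rw [Finset.sum_boole, XCoeff]
  congr 1
  apply Nat.subtype_card
  intro f
  rw [Finset.mem_filter, mem_CP]
  simp only [cwt_apply]
  constructor
  · rintro ⟨⟨h1, _⟩, h2⟩
    exact ⟨h1, fun i => DFunLike.congr_fun h2 i⟩
  · rintro ⟨h1, h2⟩
    refine ⟨⟨h1, fun v => ?_⟩, Finsupp.ext h2⟩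
    by_contra hc
    exact cwt_ne f v (by rw [h2, hμ _ (by omega)])

lemma eval_expand {V : Type*} [Fintype V] (G : SimpleGraph V) {N : ℕ}
    (c : Nat.Partition N → ℚ) (hc : ∀ μ, XCoeff G μ = ∑ ν, c ν * schurFn ν μ) (n : ℕ)
    (x : ℕ → ℂ) :
    ∑ f ∈ CP G n, ∏ v, x (f v) = ∑ ν, (c ν : ℂ) * SP x n (shape ν) := by
  have key : ∑ f ∈ CP G n, ∏ v, (MvPolynomial.X (f v) : MvPolynomial ℕ ℚ) =
      ∑ ν, MvPolynomial.C (c ν) *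
        SP (fun i => (MvPolynomial.X i : MvPolynomial ℕ ℚ)) n (shape ν) := by
    ext μ
    by_cases hμ : ∀ i, n < i → μ i = 0
    · rw [← XCoeff_eq G μ n hμ, hc, MvPolynomial.coeff_sum]
      refine Finset.sum_congr rfl fun ν _ => ?_
      rw [MvPolynomial.coeff_C_mul, schurFn_eq ν μ n hμ]
    · push Not at hμ
      obtain ⟨i, hi, hi'⟩ := hμ
      rw [MvPolynomial.coeff_sum, MvPolynomial.coeff_sum, Finset.sum_eq_zero,
        Finset.sum_eq_zero]
      · intro ν _
        rw [MvPolynomial.coeff_C_mul, SP_coeff_zero ν μ n i hi hi', mul_zero]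
      · intro f hf
        rw [prod_X_cwt, MvPolynomial.coeff_monomial, if_neg]
        rintro rfl
        apply hi'
        simp only [cwt, Finsupp.finsetSum_apply]
        refine Finset.sum_eq_zero fun v _ => ?_
        have := ((mem_CP _ _ _).1 hf).2 v
        rw [Finsupp.single_apply, if_neg (by omega)]
  have := congrArg (MvPolynomial.eval₂Hom (algebraMap ℚ ℂ) x) key
  simp only [map_sum, map_prod, map_mul, SP_map, MvPolynomial.eval₂Hom_X',
    MvPolynomial.eval₂Hom_C] at this
  simpa using this

lemma genNet_adj_inl {n m : ℕ} (i j : Fin n) (h : i ≠ j) :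
    (genNet n m).Adj (Sum.inl i) (Sum.inl j) := by
  simp [genNet, SimpleGraph.fromRel_adj, h]

lemma genNet_coeff_zero {N : ℕ} (n m : ℕ) (hn : 1 ≤ n) (κ : Nat.Partition N)
    (hκ : shape κ (n - 1) = 0) : XCoeff (genNet n m) (up (shape κ)) = 0 := by
  by_contra h
  rw [XCoeff, Nat.cast_eq_zero] at h
  obtain ⟨⟨f, h1, h2⟩⟩ := (Nat.card_ne_zero.1 h).1
  simp only [cwt_apply] at h2
  have hlt : ∀ i : Fin n, f (Sum.inl i) - 1 < n - 1 := by
    intro i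
    by_contra hc
    have h3 := cwt_ne f (Sum.inl i)
    have h4 := h1.1 (Sum.inl i)
    rw [h2] at h3
    obtain ⟨s, hs⟩ := Nat.exists_eq_add_of_lt h4
    rw [hs, zero_add, up_succ] at h3
    have := shape_antitone κ (show n - 1 ≤ s by omega)
    omega
  have hinj : Function.Injective (fun i : Fin n => (⟨f (Sum.inl i) - 1, hlt i⟩ : Fin (n - 1))) := by
    intro i j hij
    by_contra hne
    have := h1.2 _ _ (genNet_adj_inl (m := m) i j hne)
    have h3 := h1.1 (Sum.inl i)
    have h4 := h1.1 (Sum.inl j)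
    simp only [Fin.mk.injEq] at hij
    omega
  have := Fintype.card_le_of_injective _ hinj
  simp at this
  omega

/-- the coefficient is an evaluation at roots of unity -/
lemma fCD_eval (C D : ℕ) (hn : 1 ≤ C + D) (ζ : ℂ) (hζ : IsPrimitiveRoot ζ (C + D + 1))
    (hprod : ∏ i ∈ Finset.range (C + D), (- ζ ^ (i + 1)) = 1) :
    (fCD C D : ℂ) = ∑ f ∈ CP (genNet (C + D) C) (C + D), ∏ v, (- ζ ^ (f v)) := by
  have hcard : Fintype.card (Fin (C + D) ⊕ Fin C) = 2 * C + D := by simp; omega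
  have hex : ∃ c : Nat.Partition (2 * C + D) →₀ ℚ, ∀ μ,
      XCoeff (genNet (C + D) C) μ = c.sum fun ν a => a * schurFn ν μ := by
    have := XCoeff_symHom (genNet (C + D) C)
    rw [hcard] at this
    exact this.expand
  rw [fCD, sCoeff, dif_pos hex]
  have hc := hex.choose_spec
  set c := hex.choose
  have hc' : ∀ μ, XCoeff (genNet (C + D) C) μ = ∑ ν, c ν * schurFn ν μ := by
    intro μ
    rw [hc, Finsupp.sum_fintype _ _ (by simp)]
  rw [eval_expand _ c hc' (C + D) (fun i => - ζ ^ i)]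
  have h0 : ∀ κ : Nat.Partition (2 * C + D), shape κ (C + D - 1) = 0 → c κ = 0 := by
    apply tri (fun κ => shape κ (C + D - 1) = 0)
    · intro κ ν h1 h2
      exact (kostka_le κ ν h2).2.2 _ h1
    · intro κ hκ
      rw [← hc']
      exact genNet_coeff_zero _ _ hn κ hκ
  rw [Finset.sum_eq_single (twoOne C D)]
  · have hdC : Antitone (col C) := by
      intro a b hab
      simp only [col_apply]
      split_ifs <;> omega
    rw [shape_twoOne, SP_strip _ _ _ (by simp [col_apply]),
      SP_delta (C + D) ζ hζ C (col C) hdC (degree_col C) (by omega), if_pos rfl, hprod]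
    simp
  · intro ν _ hν
    by_cases h1 : shape ν (C + D - 1) = 0
    · rw [h0 ν h1]; simp
    by_cases h2 : shape ν (C + D) = 0
    swap
    · rw [SP_vanish _ _ _ h2, mul_zero]
    have hle : ∀ i, i < C + D → 1 ≤ shape ν i := by
      intro i hi
      have := shape_antitone ν (show i ≤ C + D - 1 by omega)
      omega
    have hge : ∀ i, C + D ≤ i → shape ν i = 0 := by
      intro i hi
      have := shape_antitone ν hi
      omega
    have e : shape ν = (shape ν - col (C + D)) + col (C + D) := by
      ext i
      simp only [Finsupp.add_apply, Finsupp.tsub_apply, col_apply]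
      have := hle i
      split_ifs <;> omega
    have hanti : Antitone (shape ν - col (C + D) : ℕ →₀ ℕ) := by
      intro a b hab
      simp only [Finsupp.tsub_apply, col_apply]
      have := shape_antitone ν hab
      have := hge b
      split_ifs <;> omega
    have hdeg : Finsupp.degree (shape ν - col (C + D)) = C := by
      have h3 := shape_degree ν
      rw [e, map_add, degree_col] at h3
      omega
    have hz : (shape ν - col (C + D)) (C + D) = 0 := by simp [h2]
    rw [e, SP_strip _ _ _ hz, SP_delta (C + D) ζ hζ C _ hanti hdeg (by omega), if_neg]
    · simp
    · intro h4
      apply hν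
      apply shape_inj
      rw [shape_twoOne, e, h4]
  · simp

lemma esymm_one (n : ℕ) (ζ : ℂ) (hζ : IsPrimitiveRoot ζ (n + 1)) (r : ℕ) (hr : r ≤ n) :
    ∑ T ∈ (Finset.univ : Finset (Fin n)).powersetCard r, ∏ k ∈ T, (- ζ ^ ((k : ℕ) + 1)) = 1 := by
  have h1 : (Polynomial.X ^ (n + 1) - 1 : Polynomial ℂ) =
      ∏ k ∈ Finset.range (n + 1), (Polynomial.X - Polynomial.C (ζ ^ k)) := by
    rw [Polynomial.X_pow_sub_one_eq_prod (Nat.succ_pos n) hζ]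
    have : Polynomial.nthRootsFinset (n + 1) (1 : ℂ) =
        (Finset.range (n + 1)).image (fun k => ζ ^ k) := by
      symm
      apply Finset.eq_of_subset_of_card_le
      · intro z hz
        obtain ⟨k, _, rfl⟩ := Finset.mem_image.1 hz
        rw [Polynomial.mem_nthRootsFinset (Nat.succ_pos n), ← pow_mul, mul_comm, pow_mul,
          hζ.pow_eq_one, one_pow]
      · rw [hζ.card_nthRootsFinset, Finset.card_image_of_injOn, Finset.card_range]
        intro a ha b hb hab
        exact hζ.pow_inj (by simpa using ha) (by simpa using hb) hab
    rw [this, Finset.prod_image]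
    intro a ha b hb hab
    exact hζ.pow_inj (by simpa using ha) (by simpa using hb) hab
  rw [Finset.prod_range_succ', ← geom_sum_mul, pow_zero, map_one] at h1
  have h2 := mul_right_cancel₀ (Polynomial.X_sub_C_ne_zero (1 : ℂ)) (by simpa using h1)
  replace h2 : ∑ i ∈ Finset.range (n + 1), (Polynomial.X ^ i : Polynomial ℂ) =
      ∏ k ∈ Finset.range n, (Polynomial.X - Polynomial.C (ζ ^ (k + 1))) := by simpa using h2
  rw [← Fin.prod_univ_eq_prod_range
    (fun k => (Polynomial.X - Polynomial.C (ζ ^ (k + 1)) : Polynomial ℂ))] at h2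
  have h3 := congrArg (fun p => Polynomial.coeff p (n - r)) h2
  have h4 := Finset.prod_X_add_C_coeff (Finset.univ : Finset (Fin n))
    (fun k => - ζ ^ ((k : ℕ) + 1)) (k := n - r) (by simp)
  have e : n - (n - r) = r := by omega
  rw [Finset.card_univ, Fintype.card_fin, e] at h4
  rw [← h4]
  simp only [map_neg, ← sub_eq_add_neg]
  rw [← h3]
  simp only [Polynomial.finsetSum_coeff, Polynomial.coeff_X_pow]
  rw [Finset.sum_ite_eq, if_pos (by simp)]

lemma perm_sum_indep {n : ℕ} (y : Fin n → ℂ) (S T : Finset (Fin n)) (h : S.card = T.card) :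
    ∑ π : Equiv.Perm (Fin n), ∏ i ∈ S, y (π i) = ∑ π : Equiv.Perm (Fin n), ∏ i ∈ T, y (π i) := by
  obtain ⟨σ, hσ⟩ : ∃ σ : Equiv.Perm (Fin n), S.map σ.toEmbedding = T := by
    have e : {x // x ∈ S} ≃ {x // x ∈ T} := Finset.equivOfCardEq h
    refine ⟨e.extendSubtype, Finset.eq_of_subset_of_card_le ?_ (by simp [h])⟩
    intro z hz
    obtain ⟨x, hx, rfl⟩ := Finset.mem_map.1 hz
    exact e.extendSubtype_mem x hx
  subst hσ
  rw [← Equiv.sum_comp (Equiv.mulRight σ)]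
  refine Finset.sum_congr rfl fun π _ => ?_
  rw [Finset.prod_map]
  rfl

lemma perm_sum {n : ℕ} (y : Fin n → ℂ)
    (hy : ∀ r ≤ n, ∑ T ∈ (Finset.univ : Finset (Fin n)).powersetCard r, ∏ k ∈ T, y k = 1)
    (S : Finset (Fin n)) :
    ∑ π : Equiv.Perm (Fin n), ∏ i ∈ S, y (π i) =
      (S.card.factorial : ℂ) * ((n - S.card).factorial : ℂ) := by
  have hS : S.card ≤ n := by simpa using Finset.card_le_univ S
  have h1 : ∑ T ∈ (Finset.univ : Finset (Fin n)).powersetCard S.card,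
      ∑ π : Equiv.Perm (Fin n), ∏ i ∈ T, y (π i) = (n.factorial : ℂ) := by
    rw [Finset.sum_comm]
    have : ∀ π : Equiv.Perm (Fin n), ∑ T ∈ (Finset.univ : Finset (Fin n)).powersetCard S.card,
        ∏ i ∈ T, y (π i) = 1 := by
      intro π
      rw [← hy _ hS]
      refine Finset.sum_bij' (fun T _ => T.map π.toEmbedding)
        (fun T _ => T.map π.symm.toEmbedding) ?_ ?_ ?_ ?_ ?_
      · intro T hT; simpa [Finset.mem_powersetCard] using hT
      · intro T hT; simpa [Finset.mem_powersetCard] using hT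
      · intro T hT; ext; simp
      · intro T hT; ext; simp
      · intro T hT; simp
    simp [this, Fintype.card_perm]
  rw [Finset.sum_congr rfl fun T hT => perm_sum_indep y T S (Finset.mem_powersetCard.1 hT).2,
    Finset.sum_const, Finset.card_powersetCard, Finset.card_univ, Fintype.card_fin,
    nsmul_eq_mul] at h1
  have h2 := Nat.choose_mul_factorial_mul_factorial hS
  have h3 : (n.choose S.card : ℂ) ≠ 0 := by exact_mod_cast (Nat.choose_pos hS).ne'
  apply mul_left_cancel₀ h3
  rw [h1, ← h2]
  push_cast
  ring

lemma net_sum (C D : ℕ) (y : ℕ → ℂ)  :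
    ∑ f ∈ CP (genNet (C + D) C) (C + D), ∏ v, y (f v) =
    ∑ π : Equiv.Perm (Fin (C + D)), (∏ i : Fin (C + D), y ((π i : ℕ) + 1)) *
      ∏ j : Fin C, ∑ k : Fin (C + D), if k = π (Fin.castAdd D j) then 0 else y ((k : ℕ) + 1) := by
  have hR : ∀ π : Equiv.Perm (Fin (C + D)), (∏ j : Fin C, ∑ k : Fin (C + D),
      if k = π (Fin.castAdd D j) then 0 else y ((k : ℕ) + 1)) =
      ∑ h ∈ Fintype.piFinset (fun j : Fin C => Finset.univ.erase (π (Fin.castAdd D j))),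
        ∏ j, y ((h j : ℕ) + 1) := by
    intro π
    rw [← Finset.prod_univ_sum (fun j : Fin C => Finset.univ.erase (π (Fin.castAdd D j)))
      (fun _ k => y ((k : ℕ) + 1))]
    refine Finset.prod_congr rfl fun j _ => ?_
    rw [← Finset.filter_ne', Finset.sum_filter]
    refine Finset.sum_congr rfl fun k _ => ?_
    by_cases h : k = π (Fin.castAdd D j) <;> simp [h]
  simp only [hR, Finset.mul_sum]
  rw [Finset.sum_sigma']
  symm
  refine Finset.sum_bij (fun p _ => Sum.elim (fun i => (p.1 i : ℕ) + 1) (fun j => (p.2 j : ℕ) + 1))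
    ?_ ?_ ?_ ?_
  · rintro ⟨π, h⟩ hp
    simp only [Finset.mem_sigma, Finset.mem_univ, Fintype.mem_piFinset, true_and,
      Finset.mem_erase, and_true] at hp
    rw [mem_CP]
    refine ⟨⟨?_, ?_⟩, ?_⟩
    · rintro (i | j) <;> simp
    · have hne : ∀ (i : Fin (C + D)) (j : Fin C), (i : ℕ) = j → (π i : ℕ) ≠ h j := by
        intro i j hij he
        have : i = Fin.castAdd D j := Fin.ext hij
        subst this
        exact hp j (Fin.ext he.symm)
      rintro (i | j) (i' | j') hadj
      · have : i ≠ i' := fun h => hadj.ne (by rw [h])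
        simpa [Fin.val_inj] using this
      · have : (i : ℕ) = j' := by simpa [genNet, SimpleGraph.fromRel_adj] using hadj
        simpa using hne i j' this
      · have : (i' : ℕ) = j := by simpa [genNet, SimpleGraph.fromRel_adj] using hadj
        simpa using (hne i' j this).symm
      · simp [genNet, SimpleGraph.fromRel_adj] at hadj
    · rintro (i | j)
      · exact (π i).2
      · exact (h j).2
  · rintro ⟨π, h⟩ _ ⟨π', h'⟩ _ he
    have h1 : π = π' := by
      ext i
      simpa using congrFun he (Sum.inl i)
    have h2 : h = h' := by
      ext j
      simpa using congrFun he (Sum.inr j)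
    rw [h1, h2]
  · intro f hf
    rw [mem_CP] at hf
    obtain ⟨⟨h1, h2⟩, h3⟩ := hf
    let g : Fin (C + D) → Fin (C + D) := fun i => ⟨f (Sum.inl i) - 1, by
      have := h1 (Sum.inl i); have := h3 (Sum.inl i); omega⟩
    let h : Fin C → Fin (C + D) := fun i => ⟨f (Sum.inr i) - 1, by
      have := h1 (Sum.inr i); have := h3 (Sum.inr i); omega⟩
    have hg : Function.Injective g := by
      intro i j hij
      by_contra hne
      have := h2 _ _ (genNet_adj_inl (m := C) i j hne)
      have h3 := h1 (Sum.inl i)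
      have h4 := h1 (Sum.inl j)
      simp only [g, Fin.mk.injEq] at hij
      omega
    refine ⟨⟨Equiv.ofBijective g (Finite.injective_iff_bijective.1 hg), h⟩, ?_, ?_⟩
    · simp only [Finset.mem_sigma, Finset.mem_univ, Fintype.mem_piFinset, true_and,
        Finset.mem_erase, and_true]
      intro j he
      have := h2 (Sum.inl (Fin.castAdd D j)) (Sum.inr j)
        (by simp [genNet, SimpleGraph.fromRel_adj])
      have h3 := h1 (Sum.inl (Fin.castAdd D j))
      have h4 := h1 (Sum.inr j)
      simp only [Equiv.ofBijective_apply, g, h, Fin.mk.injEq] at he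
      omega
    · funext v
      have := h1 v
      rcases v with i | j
      · simp only [Sum.elim_inl, Equiv.ofBijective_apply, g]; omega
      · simp only [Sum.elim_inr, h]; omega
  · rintro ⟨π, h⟩ _
    rw [Fintype.prod_sum_type]
    simp

lemma fCD_formula (C D : ℕ) (hn : 1 ≤ C + D) :
    fCD C D = ∑ r ∈ Finset.range (C + 1),
      (-1 : ℚ) ^ r * C.choose r * r.factorial * (C + D - r).factorial := by
  obtain ⟨ζ, hζ⟩ : ∃ ζ : ℂ, IsPrimitiveRoot ζ (C + D + 1) :=
    ⟨_, Complex.isPrimitiveRoot_exp _ (Nat.succ_ne_zero _)⟩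
  have hy := esymm_one (C + D) ζ hζ
  have hprod : ∏ i : Fin (C + D), (- ζ ^ ((i : ℕ) + 1)) = 1 := by
    have := hy (C + D) le_rfl
    have e : (Finset.univ : Finset (Fin (C + D))).powersetCard (C + D) = {Finset.univ} := by
      have := Finset.powersetCard_self (Finset.univ : Finset (Fin (C + D)))
      simpa using this
    rwa [e, Finset.sum_singleton] at this
  have hsum : ∑ i : Fin (C + D), (- ζ ^ ((i : ℕ) + 1)) = 1 := by
    have := hy 1 hn
    rw [Finset.powersetCard_one, Finset.sum_map] at this
    simpa using this
  have h := fCD_eval C D hn ζ hζ (by rw [← hprod, Fin.prod_univ_eq_prod_range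
    (fun i => - ζ ^ (i + 1))])
  rw [net_sum C D (fun i => - ζ ^ i)] at h
  have h2 : ∀ π : Equiv.Perm (Fin (C + D)), (∏ i : Fin (C + D), (-ζ ^ ((π i : ℕ) + 1))) *
      (∏ j : Fin C, ∑ k : Fin (C + D), if k = π (Fin.castAdd D j) then 0 else -ζ ^ ((k : ℕ) + 1)) =
      ∑ J ∈ (Finset.univ : Finset (Fin C)).powerset, (-1) ^ J.card *
        ∏ i ∈ J.map (Fin.castAddEmb D), (-ζ ^ ((π i : ℕ) + 1)) := by
    intro π
    rw [Equiv.prod_comp π (fun i : Fin (C + D) => -ζ ^ ((i : ℕ) + 1)), hprod, one_mul]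
    have : ∀ j : Fin C, (∑ k : Fin (C + D),
        if k = π (Fin.castAdd D j) then 0 else -ζ ^ ((k : ℕ) + 1)) =
        1 + -(-ζ ^ ((π (Fin.castAdd D j) : ℕ) + 1)) := by
      intro j
      rw [← sub_eq_add_neg, eq_sub_iff_add_eq, ← hsum]
      rw [← Finset.sum_erase_add _ _ (Finset.mem_univ (π (Fin.castAdd D j)))]
      rw [← Finset.sum_erase_add (a := π (Fin.castAdd D j)) Finset.univ (fun k : Fin (C + D) =>
        -ζ ^ ((k : ℕ) + 1)) (Finset.mem_univ _)]
      rw [if_pos rfl, add_zero]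
      congr 1
      refine Finset.sum_congr rfl fun k hk => ?_
      rw [if_neg (Finset.ne_of_mem_erase hk)]
    simp only [this]
    rw [Finset.prod_one_add]
    refine Finset.sum_congr rfl fun J _ => ?_
    rw [Finset.prod_neg, Finset.prod_map]
    rfl
  simp only [h2] at h
  rw [Finset.sum_comm] at h
  simp only [← Finset.mul_sum] at h
  rw [Finset.sum_congr rfl fun J _ => by
    rw [perm_sum (fun i : Fin (C + D) => -ζ ^ ((i : ℕ) + 1)) hy, Finset.card_map]] at h
  rw [Finset.sum_powerset_apply_card (fun r => (-1 : ℂ) ^ r *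
    ((r.factorial : ℂ) * ((C + D - r).factorial : ℂ)))] at h
  simp only [Finset.card_univ, Fintype.card_fin, nsmul_eq_mul] at h
  have h3 : (fCD C D : ℂ) = ((∑ r ∈ Finset.range (C + 1),
      (-1 : ℚ) ^ r * C.choose r * r.factorial * (C + D - r).factorial : ℚ) : ℂ) := by
    rw [h]
    push_cast
    refine Finset.sum_congr rfl fun r _ => ?_
    ring
  exact_mod_cast h3

lemma alt_choose (M : ℕ) : ∑ i ∈ Finset.Icc 1 M, (-1 : ℚ) ^ (i - 1) * M.choose i =
    if M = 0 then 0 else 1 := by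
  have h : ∑ i ∈ Finset.range (M + 1), (-1 : ℚ) ^ i * M.choose i = if M = 0 then 1 else 0 := by
    exact_mod_cast congrArg (Int.cast : ℤ → ℚ) (Int.alternating_sum_range_choose (n := M))
  rw [Finset.sum_range_succ'] at h
  have e : ∑ i ∈ Finset.Icc 1 M, (-1 : ℚ) ^ (i - 1) * M.choose i =
      ∑ i ∈ Finset.range M, (-1 : ℚ) ^ i * M.choose (i + 1) := by
    have := Finset.sum_Ico_add' (fun i => (-1 : ℚ) ^ (i - 1) * M.choose i) 0 M 1
    simp only [Nat.add_sub_cancel, zero_add] at this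
    rw [Finset.range_eq_Ico, this]
    rfl
  rw [e]
  have e2 : ∑ k ∈ Finset.range M, (-1 : ℚ) ^ (k + 1) * M.choose (k + 1) =
      - ∑ i ∈ Finset.range M, (-1 : ℚ) ^ i * M.choose (i + 1) := by
    rw [← Finset.sum_neg_distrib]
    refine Finset.sum_congr rfl fun i _ => ?_
    ring
  rw [e2] at h
  split_ifs at h ⊢ <;> simp at h ⊢ <;> linarith

lemma choose_id (m i r : ℕ) (hr : r ≤ m) :
    m.choose i * ((m - i).choose r * r.factorial * (m - r).factorial) =
      m.factorial * (m - r).choose i := by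
  by_cases h : i + r ≤ m
  · have h1 := Nat.choose_mul_factorial_mul_factorial (show i ≤ m by omega)
    have h2 := Nat.choose_mul_factorial_mul_factorial (show r ≤ m - i by omega)
    have h3 := Nat.choose_mul_factorial_mul_factorial (show i ≤ m - r by omega)
    have e : m - r - i = m - i - r := by omega
    rw [e] at h3
    have hpos : 0 < i.factorial * (m - i - r).factorial :=
      Nat.mul_pos (Nat.factorial_pos _) (Nat.factorial_pos _)
    apply Nat.eq_of_mul_eq_mul_right hpos
    calc _ = m.choose i * i.factorial * ((m - i).choose r * r.factorial * (m - i - r).factorial)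
          * (m - r).factorial := by ring
      _ = m.factorial * (m - r).factorial := by rw [h2, h1]
      _ = m.factorial * ((m - r).choose i * i.factorial * (m - i - r).factorial) := by rw [h3]
      _ = _ := by ring
  · rw [Nat.choose_eq_zero_of_lt (show m - r < i by omega), mul_zero]
    by_cases hi : i ≤ m
    · rw [Nat.choose_eq_zero_of_lt (show m - i < r by omega)]; simp
    · rw [Nat.choose_eq_zero_of_lt (show m < i by omega)]; simp

/-- For `n ≥ 3`:
`f(n,0) = n · ∑_{i=1}^{n-1} (n-1 choose i) · (-1)^{i-1} · f(n-i-1, i)`. -/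
theorem fCD_bottom_hook_removal (n : ℕ) (hn : 3 ≤ n) :
    fCD n 0 = (n : ℚ) * ∑ i ∈ Finset.Icc 1 (n - 1),
      (((n - 1).choose i : ℕ) : ℚ) * (-1) ^ (i - 1) * fCD (n - i - 1) i := by
  obtain ⟨m, rfl⟩ : ∃ m, n = m + 1 := ⟨n - 1, by omega⟩
  rw [Nat.add_sub_cancel]
  have hL : fCD (m + 1) 0 = ((m + 1).factorial : ℚ) *
      ∑ r ∈ Finset.range m, (-1 : ℚ) ^ r := by
    rw [fCD_formula _ _ (by omega)]
    have e : ∑ r ∈ Finset.range m, (-1 : ℚ) ^ r = ∑ r ∈ Finset.range (m + 1 + 1), (-1 : ℚ) ^ r := by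
      rw [Finset.sum_range_succ, Finset.sum_range_succ]
      ring
    rw [e, Finset.mul_sum]
    refine Finset.sum_congr rfl fun r hr => ?_
    have h := Nat.choose_mul_factorial_mul_factorial
      (show r ≤ m + 1 by have := Finset.mem_range.1 hr; omega)
    rw [← h, add_zero]
    push_cast
    ring
  have hR : ∀ i ∈ Finset.Icc 1 m, ((m.choose i : ℕ) : ℚ) * (-1) ^ (i - 1) *
      fCD (m + 1 - i - 1) i = ∑ r ∈ Finset.range (m + 1),
        (m.factorial : ℚ) * (-1) ^ r * ((-1) ^ (i - 1) * (m - r).choose i) := by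
    intro i hi
    rw [Finset.mem_Icc] at hi
    have e1 : m + 1 - i - 1 = m - i := by omega
    have e2 : m - i + i = m := by omega
    rw [e1, fCD_formula _ _ (by omega), e2]
    rw [Finset.sum_subset (s₂ := Finset.range (m + 1))]
    · rw [Finset.mul_sum]
      refine Finset.sum_congr rfl fun r hr => ?_
      have h := choose_id m i r (by have := Finset.mem_range.1 hr; omega)
      have h' : (m.choose i : ℚ) * ((m - i).choose r * r.factorial * (m - r).factorial) =
        m.factorial * (m - r).choose i := by exact_mod_cast h
      linear_combination ((-1 : ℚ) ^ (i - 1) * (-1) ^ r) * h'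
    · intro r hr
      rw [Finset.mem_range] at hr ⊢
      omega
    · intro r _ hr
      rw [Finset.mem_range] at hr
      rw [Nat.choose_eq_zero_of_lt (by omega)]
      simp
  rw [hL, Finset.sum_congr rfl hR, Finset.sum_comm]
  have hS : ∀ r ∈ Finset.range (m + 1), ∑ i ∈ Finset.Icc 1 m,
      (m.factorial : ℚ) * (-1) ^ r * ((-1) ^ (i - 1) * (m - r).choose i) =
      (m.factorial : ℚ) * (-1) ^ r * if m - r = 0 then 0 else 1 := by
    intro r _
    rw [← Finset.mul_sum, ← alt_choose]
    congr 1
    symm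
    apply Finset.sum_subset
    · apply Finset.Icc_subset_Icc_right; omega
    · intro i hi hi'
      rw [Finset.mem_Icc] at hi hi'
      rw [Nat.choose_eq_zero_of_lt (by omega)]
      simp
  rw [Finset.sum_congr rfl hS, Finset.sum_range_succ, Nat.sub_self, if_pos rfl, mul_zero, add_zero,
    Nat.factorial_succ, Finset.mul_sum, Finset.mul_sum]
  refine Finset.sum_congr rfl fun r hr => ?_
  rw [Finset.mem_range] at hr
  rw [if_neg (by omega)]
  push_cast
  ring
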